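/- For every dimension d ≥ 1 there exists a constant c > 0 independent of the mesh size h and the spline degree p (possibly depending on d) such that the a(·,·)-orthogonal (Galerkin) projector T_c : S^d → (S_c)^d onto the coarse tensor product spline space satisfies ‖u − T_c u‖_{L2(Ω)} ≤ c · h · (a(u,u))^{1/2} for all u ∈ S^d. -/

import Mathlib

noncomputable section

open MeasureTheory Set

namespace SplineMG

/-- The `j`-th piece of the uniform partition of `[0,1]` into `m` subintervals of
length `h = 1/m`; the first and last pieces are extended to `-∞` resp. `+∞`
(the spline is extended polynomially outside `[0,1]`). -/
def pieceSet (m j : ℕ) : Set ℝ :=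
  (if j = 0 then Iic ((1 : ℝ) / m) else Icc ((j : ℝ) / m) (((j : ℝ) + 1) / m)) ∪
  (if j = m - 1 then Ici (((m : ℝ) - 1) / m) else ∅)

/-- `u : ℝ → ℝ` belongs to the univariate spline space `S` of degree `p` and maximal
smoothness `C^{p-1}` on the uniform partition of `(0,1)` into `m` intervals of
length `h = 1/m`. -/
def IsSpline (m p : ℕ) (u : ℝ → ℝ) : Prop :=
  ContDiffOn ℝ (p - 1 : ℕ) u (Ioo (0 : ℝ) 1) ∧
  ∀ j < m, ∃ q : Polynomial ℝ, q.natDegree ≤ p ∧ ∀ x ∈ pieceSet m j, u x = q.eval x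

/-- `u` belongs to the subspace `S₀` of `S`: all odd derivatives of order `< p`
vanish at both endpoints. -/
def IsSpline0 (m p : ℕ) (u : ℝ → ℝ) : Prop :=
  IsSpline m p u ∧
  ∀ l : ℕ, 2 * l + 1 < p →
    iteratedDeriv (2 * l + 1) u 0 = 0 ∧ iteratedDeriv (2 * l + 1) u 1 = 0

/-- The `L²(0,1)` inner product. -/
def ip0 (u v : ℝ → ℝ) : ℝ := ∫ x in Ioo (0 : ℝ) 1, u x * v x

/-- The squared `L²(0,1)` norm `‖u‖₀²`. -/
def l2normSq (u : ℝ → ℝ) : ℝ := ∫ x in Ioo (0 : ℝ) 1, u x ^ 2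

/-- The `L²(0,1)` norm `‖u‖₀`. -/
def l2norm (u : ℝ → ℝ) : ℝ := Real.sqrt (l2normSq u)

/-- The squared `H¹(0,1)` seminorm `|u|₁²`. -/
def h1semiSq (u : ℝ → ℝ) : ℝ := ∫ x in Ioo (0 : ℝ) 1, deriv u x ^ 2

/-- The `H¹(0,1)` seminorm `|u|₁`. -/
def h1semi (u : ℝ → ℝ) : ℝ := Real.sqrt (h1semiSq u)

/-- The squared full `H¹(0,1)` norm. -/
def h1normSq (u : ℝ → ℝ) : ℝ := l2normSq u + h1semiSq u

/-- `u` belongs to `S₁`, the `L²(0,1)`-orthogonal complement of `S₀` in `S`. -/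
def IsSpline1 (m p : ℕ) (u : ℝ → ℝ) : Prop :=
  IsSpline m p u ∧ ∀ v, IsSpline0 m p v → ip0 u v = 0

/-- `v = Q₀ u` is the `L²(0,1)`-orthogonal projection of `u` onto `S₀`. -/
def IsL2Proj0 (m p : ℕ) (u v : ℝ → ℝ) : Prop :=
  IsSpline0 m p v ∧ ∀ w, IsSpline0 m p w → ip0 (u - v) w = 0

/-- The component predicate: `false ↦ S₀`, `true ↦ S₁`. -/
def IsSplineC (m p : ℕ) : Bool → (ℝ → ℝ) → Prop
  | false => IsSpline0 m p
  | true => IsSpline1 m p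

/-- The tensor-product spline space `S^d = S ⊗ ⋯ ⊗ S` on `(0,1)^d`. -/
def TensorSpline (d m p : ℕ) : Submodule ℝ ((Fin d → ℝ) → ℝ) :=
  Submodule.span ℝ {u | ∃ f : Fin d → ℝ → ℝ, (∀ i, IsSpline m p (f i)) ∧
    u = fun x => ∏ i, f i (x i)}

/-- The subspace `S_α = S_{α₁} ⊗ ⋯ ⊗ S_{α_d}` of `S^d`, for `α ∈ {0,1}^d`
(`false ↦ 0`, `true ↦ 1`). -/
def TensorSplineSub (d m p : ℕ) (α : Fin d → Bool) : Submodule ℝ ((Fin d → ℝ) → ℝ) :=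
  Submodule.span ℝ {u | ∃ f : Fin d → ℝ → ℝ, (∀ i, IsSplineC m p (α i) (f i)) ∧
    u = fun x => ∏ i, f i (x i)}

/-- The open unit cube `Ω = (0,1)^d`. -/
def cube (d : ℕ) : Set (Fin d → ℝ) := Set.univ.pi fun _ => Ioo (0 : ℝ) 1

/-- The `i`-th partial derivative. -/
def pd (d : ℕ) (i : Fin d) (u : (Fin d → ℝ) → ℝ) : (Fin d → ℝ) → ℝ :=
  fun x => deriv (fun t => u (Function.update x i t)) (x i)

/-- The `L²(Ω)` inner product on the unit cube. -/
def ipd (d : ℕ) (u v : (Fin d → ℝ) → ℝ) : ℝ := ∫ x in cube d, u x * v x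

/-- The squared `L²(Ω)` norm. -/
def l2normSqD (d : ℕ) (u : (Fin d → ℝ) → ℝ) : ℝ := ∫ x in cube d, u x ^ 2

/-- The bilinear form `a(u,v) = ∫_Ω (∇u·∇v + uv) dx`. -/
def aForm (d : ℕ) (u v : (Fin d → ℝ) → ℝ) : ℝ :=
  ∫ x in cube d, (∑ i, pd d i u x * pd d i v x) + u x * v x

/-- The squared `H¹(Ω)` seminorm. -/
def h1semiSqD (d : ℕ) (u : (Fin d → ℝ) → ℝ) : ℝ :=
  ∫ x in cube d, ∑ i, pd d i u x ^ 2

/-- The squared full `H¹(Ω)` norm. -/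
def h1normSqD (d : ℕ) (u : (Fin d → ℝ) → ℝ) : ℝ := l2normSqD d u + h1semiSqD d u

/-- `v = Q_α u` is the `L²(Ω)`-orthogonal projection of `u` onto `S_α`. -/
def IsL2ProjSub (d m p : ℕ) (α : Fin d → Bool) (u v : (Fin d → ℝ) → ℝ) : Prop :=
  v ∈ TensorSplineSub d m p α ∧ ∀ w ∈ TensorSplineSub d m p α, ipd d (u - v) w = 0

/-- The coarse tensor-product spline space `(S_c)^d` (with `m/2` knot spans of
width `2h` per direction). -/
def TensorSplineCoarse (d m p : ℕ) : Submodule ℝ ((Fin d → ℝ) → ℝ) :=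
  TensorSpline d (m / 2) p

/-- `v = T_c u` is the `a(·,·)`-orthogonal (Galerkin) projection of `u` onto `(S_c)^d`. -/
def IsGalerkinCoarseProj (d m p : ℕ) (u v : (Fin d → ℝ) → ℝ) : Prop :=
  v ∈ TensorSplineCoarse d m p ∧ ∀ w ∈ TensorSplineCoarse d m p, aForm d (u - v) w = 0

end SplineMG

namespace SplineMG

section tensor
variable {d : ℕ} {ι : Type} [Fintype ι] [DecidableEq ι]

lemma sum_swap (i : Fin d) (G : (Fin d → ι) → ι → ℝ) :
    ∑ k, ∑ b, G k b = ∑ k, ∑ a, G (Function.update k i a) (k i) := by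
  rw [← Finset.sum_product', ← Finset.sum_product']
  refine Finset.sum_nbij' (fun x => (Function.update x.1 i x.2, x.1 i))
    (fun x => (Function.update x.1 i x.2, x.1 i)) ?_ ?_ ?_ ?_ ?_ <;> simp

lemma sum_fib (i : Fin d) (F G : (Fin d → ι) → ℝ)
    (h : ∀ k, ∑ a, F (Function.update k i a) ≤ ∑ a, G (Function.update k i a)) :
    ∑ k, F k ≤ ∑ k, G k := by
  have key : ∀ F : (Fin d → ι) → ℝ,
      ∑ k, ∑ a, F (Function.update k i a) = Fintype.card ι * ∑ k, F k := by
    intro F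
    rw [sum_swap i (fun k b => F (Function.update k i b))]
    simp [Finset.mul_sum]
  have h2 := Finset.sum_le_sum (s := Finset.univ) (fun k _ => h k)
  rw [key, key] at h2
  rcases isEmpty_or_nonempty ι with h0 | h0
  · rcases isEmpty_or_nonempty (Fin d → ι) with h1 | h1
    · simp
    · exact (h0.false (h1.some i)).elim
  · exact le_of_mul_le_mul_left h2 (by exact_mod_cast Fintype.card_pos)

/-- Apply the matrix `R` in direction `i`. -/
def dirOp (R : ι → ι → ℝ) (i : Fin d) (c : (Fin d → ι) → ℝ) : (Fin d → ι) → ℝ :=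
  fun k => ∑ b, R (k i) b * c (Function.update k i b)

def W (ω c : (Fin d → ι) → ℝ) : ℝ := ∑ k, ω k * c k ^ 2

lemma dir_bound (R T : ι → ι → ℝ) (s t : ι → ℝ) (C : ℝ)
    (h : ∀ x : ι → ℝ, ∑ a, s a * (∑ b, R a b * x b) ^ 2 ≤ C * ∑ a, t a * x a ^ 2)
    (i : Fin d) (ω : (Fin d → ι) → ℝ) (hω : ∀ k a, ω (Function.update k i a) = ω k)
    (h0 : ∀ k, 0 ≤ ω k) (c : (Fin d → ι) → ℝ) :
    W (fun k => ω k * s (k i)) (dirOp R i c) ≤ C * W (fun k => ω k * t (k i)) c := by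
  unfold W
  rw [Finset.mul_sum]
  apply sum_fib i
  intro k
  have := mul_le_mul_of_nonneg_left (h (fun b => c (Function.update k i b))) (h0 k)
  simp only [dirOp, hω, Function.update_self, Function.update_idem]
  calc _ = ω k * ∑ a, s a * (∑ b, R a b * c (Function.update k i b)) ^ 2 := by
        rw [Finset.mul_sum]; simp only [mul_assoc]
    _ ≤ _ := this
    _ = _ := by
        rw [Finset.mul_sum, Finset.mul_sum]
        exact Finset.sum_congr rfl (fun a _ => by ring)

lemma fn_dirOp (R : ι → ι → ℝ) (i : Fin d) (c : (Fin d → ι) → ℝ) (ψ : Fin d → ι → ℝ) :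
    ∑ k, dirOp R i c k * ∏ j, ψ j (k j) =
    ∑ k, c k * ∏ j, (Function.update ψ i (fun b => ∑ a, R a b * ψ i a)) j (k j) := by
  simp only [dirOp, Finset.sum_mul]
  rw [sum_swap i]
  refine Finset.sum_congr rfl (fun k _ => ?_)
  simp only [Function.update_self, Function.update_idem, Function.update_eq_self]
  rw [← Finset.mul_prod_erase Finset.univ _ (Finset.mem_univ i)]
  simp only [Function.update_self]
  rw [Finset.sum_mul, Finset.mul_sum]
  refine Finset.sum_congr rfl (fun a _ => ?_)
  rw [← Finset.mul_prod_erase Finset.univ _ (Finset.mem_univ i)]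
  simp only [Function.update_self]
  have : ∏ x ∈ Finset.univ.erase i, ψ x (Function.update k i a x) =
      ∏ x ∈ Finset.univ.erase i, Function.update ψ i (fun b => ∑ a, R a b * ψ i a) x (k x) := by
    refine Finset.prod_congr rfl (fun j hj => ?_)
    have := Finset.ne_of_mem_erase hj
    simp [this]
  rw [this]; ring

/-- apply `R` in the first `j` directions -/
def iterOp (R : ι → ι → ℝ) (z : (Fin d → ι) → ℝ) : ℕ → (Fin d → ι) → ℝ
  | 0 => z
  | j + 1 => if h : j < d then dirOp R ⟨j, h⟩ (iterOp R z j) else iterOp R z j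

lemma fn_iterOp (R : ι → ι → ℝ) (z : (Fin d → ι) → ℝ) (j : ℕ) (ψ : Fin d → ι → ℝ) :
    ∑ k, iterOp R z j k * ∏ i, ψ i (k i) =
    ∑ k, z k * ∏ i : Fin d, (if (i : ℕ) < j then ∑ a, R a (k i) * ψ i a else ψ i (k i)) := by
  induction j generalizing ψ with
  | zero => simp [iterOp]
  | succ j ih =>
    unfold iterOp
    split_ifs with h
    · rw [fn_dirOp, ih]
      refine Finset.sum_congr rfl (fun k _ => ?_)
      congr 1
      refine Finset.prod_congr rfl (fun i _ => ?_)
      by_cases hi : i = ⟨j, h⟩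
      · subst hi; simp
      · have h1 : (i : ℕ) ≠ j := fun h => hi (Fin.ext h)
        simp only [Function.update_of_ne hi]
        have : (i : ℕ) < j + 1 ↔ (i : ℕ) < j := by omega
        simp only [this]
    · rw [ih]
      refine Finset.sum_congr rfl (fun k _ => ?_)
      congr 1
      refine Finset.prod_congr rfl (fun i _ => ?_)
      have := i.2
      rw [if_pos (by omega), if_pos (by omega)]

/-- the one-dimensional stability/approximation properties -/
structure Good (R : ι → ι → ℝ) (l : ι → ℝ) (D : ℝ) : Prop where
  nonneg : ∀ a, 0 ≤ l a
  Dnn : 0 ≤ D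
  s0 : ∀ x : ι → ℝ, ∑ a, (∑ b, R a b * x b) ^ 2 ≤ 4 * ∑ a, x a ^ 2
  s1 : ∀ x : ι → ℝ, ∑ a, l a * (∑ b, R a b * x b) ^ 2 ≤ 4 * ∑ a, l a * x a ^ 2
  a0 : ∀ x : ι → ℝ, ∑ a, (x a - ∑ b, R a b * x b) ^ 2 ≤ D * ∑ a, l a * x a ^ 2
  a1 : ∀ x : ι → ℝ, ∑ a, l a * (x a - ∑ b, R a b * x b) ^ 2 ≤ D * ∑ a, l a ^ 2 * x a ^ 2

lemma W_nonneg (ω c : (Fin d → ι) → ℝ) (h : ∀ k, 0 ≤ ω k) : 0 ≤ W ω c :=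
  Finset.sum_nonneg (fun k _ => mul_nonneg (h k) (sq_nonneg _))

lemma dirOp_sub (R : ι → ι → ℝ) (i : Fin d) (c : (Fin d → ι) → ℝ) :
    dirOp (fun a b => (if a = b then 1 else 0) - R a b) i c = c - dirOp R i c := by
  funext k
  simp [dirOp, sub_mul, Finset.sum_sub_distrib]

lemma sub_mat (R : ι → ι → ℝ) (x : ι → ℝ) (a : ι) :
    ∑ b, ((if a = b then 1 else 0) - R a b) * x b = x a - ∑ b, R a b * x b := by
  simp [sub_mul, Finset.sum_sub_distrib]

variable {R : ι → ι → ℝ} {l : ι → ℝ} {D : ℝ}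

lemma stab0 (g : Good R l D) (i : Fin d) (ω c : (Fin d → ι) → ℝ)
    (hω : ∀ k a, ω (Function.update k i a) = ω k) (h0 : ∀ k, 0 ≤ ω k) :
    W ω (dirOp R i c) ≤ 4 * W ω c := by
  simpa using dir_bound R R (fun _ => 1) (fun _ => 1) 4 (by simpa using g.s0) i ω hω h0 c

lemma stab1 (g : Good R l D) (i : Fin d) (ω c : (Fin d → ι) → ℝ)
    (hω : ∀ k a, ω (Function.update k i a) = ω k) (h0 : ∀ k, 0 ≤ ω k) :
    W (fun k => ω k * l (k i)) (dirOp R i c) ≤ 4 * W (fun k => ω k * l (k i)) c := by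
  simpa using dir_bound R R l l 4 (by simpa using g.s1) i ω hω h0 c

lemma app0 (g : Good R l D) (i : Fin d) (ω c : (Fin d → ι) → ℝ)
    (hω : ∀ k a, ω (Function.update k i a) = ω k) (h0 : ∀ k, 0 ≤ ω k) :
    W ω (c - dirOp R i c) ≤ D * W (fun k => ω k * l (k i)) c := by
  rw [← dirOp_sub]
  simpa using dir_bound _ R (fun _ => 1) l D
    (by simpa only [sub_mat, one_mul] using g.a0) i ω hω h0 c

lemma app1 (g : Good R l D) (i : Fin d) (ω c : (Fin d → ι) → ℝ)
    (hω : ∀ k a, ω (Function.update k i a) = ω k) (h0 : ∀ k, 0 ≤ ω k) :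
    W (fun k => ω k * l (k i)) (c - dirOp R i c) ≤ D * W (fun k => ω k * l (k i) ^ 2) c := by
  rw [← dirOp_sub]
  exact dir_bound _ R l (fun a => l a ^ 2) D
    (by simpa only [sub_mat, one_mul] using g.a1) i ω hω h0 c

/-- A weight of the form `l(k i)^α * l(k j)^β`, at most linear in directions below `n`. -/
lemma stab_iter (g : Good R l D) (ω z : (Fin d → ι) → ℝ) (n : ℕ)
    (hs : ∀ i : Fin d, (i : ℕ) < n → ∀ c, W ω (dirOp R i c) ≤ 4 * W ω c) 
    (h0 : ∀ k, 0 ≤ ω k) :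
    W ω (iterOp R z n) ≤ 4 ^ n * W ω z := by
  induction n with
  | zero => simp [iterOp]
  | succ n ih =>
    have ih := ih (fun i hi c => hs i (by omega) c)
    have := W_nonneg ω z h0
    unfold iterOp
    split_ifs with h
    · have := hs ⟨n, h⟩ (by simp) (iterOp R z n)
      rw [pow_succ]; linarith
    · rw [pow_succ]
      have : 0 ≤ (4:ℝ) ^ n * W ω z := by positivity
      linarith

lemma pow_le_4 (n : ℕ) (h : n ≤ d) (x : ℝ) (hx : 0 ≤ x) : (4:ℝ) ^ n * x ≤ 4 ^ d * x :=
  mul_le_mul_of_nonneg_right (pow_le_pow_right₀ (by norm_num) h) hx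

lemma diff0 (g : Good R l D) (z : (Fin d → ι) → ℝ) (j : Fin d) :
    W (fun _ => 1) (iterOp R z j - iterOp R z (j + 1)) ≤
      D * (4 ^ d * W (fun k => l (k j)) z) := by
  have e : iterOp R z (j + 1) = dirOp R j (iterOp R z j) := by simp [iterOp]
  rw [e]
  have h1 := app0 g j (fun _ => 1) (iterOp R z j) (by simp) (by simp)
  simp only [one_mul] at h1
  refine h1.trans (mul_le_mul_of_nonneg_left ?_ g.Dnn)
  refine (stab_iter g _ z j ?_ (fun k => g.nonneg _)).trans
    (pow_le_4 _ j.2.le _ (W_nonneg _ _ (fun k => g.nonneg _)))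
  intro i hi c
  have : j ≠ i := by rintro rfl; exact lt_irrefl _ hi
  exact stab0 g i _ c (by simp [this]) (fun k => g.nonneg _)

lemma diff1 (g : Good R l D) (z : (Fin d → ι) → ℝ) (i j : Fin d) :
    W (fun k => l (k i)) (iterOp R z j - iterOp R z (j + 1)) ≤
      D * (4 ^ d * W (fun k => l (k i) * l (k j)) z) := by
  have e : iterOp R z (j + 1) = dirOp R j (iterOp R z j) := by simp [iterOp]
  rw [e]
  have nn : ∀ k : Fin d → ι, 0 ≤ l (k i) * l (k j) :=
    fun k => mul_nonneg (g.nonneg _) (g.nonneg _)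
  have h1 : W (fun k => l (k i)) (iterOp R z j - dirOp R j (iterOp R z j)) ≤
      D * W (fun k => l (k i) * l (k j)) (iterOp R z j) := by
    by_cases hij : i = j
    · subst hij
      have := app1 g i (fun _ => 1) (iterOp R z i) (by simp) (by simp)
      simpa [sq] using this
    · exact app0 g j (fun k => l (k i)) (iterOp R z j) (by simp [hij]) (fun k => g.nonneg _)
  refine h1.trans (mul_le_mul_of_nonneg_left ?_ g.Dnn)
  refine (stab_iter g _ z j ?_ nn).trans (pow_le_4 _ j.2.le _ (W_nonneg _ _ nn))
  intro i' hi c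
  have hj : j ≠ i' := by rintro rfl; exact lt_irrefl _ hi
  by_cases hii : i = i'
  · subst hii
    have := stab1 g i (fun k => l (k j)) c (by simp [hj]) (fun k => g.nonneg _)
    simpa [mul_comm] using this
  · exact stab0 g i' _ c (by simp [hj, hii]) nn

/-- the weight of the bilinear form -/
def wt (l : ι → ℝ) (k : Fin d → ι) : ℝ := 1 + ∑ i, l (k i)

lemma W_add_weight (ω : Fin d → (Fin d → ι) → ℝ) (c : (Fin d → ι) → ℝ) :
    W (fun k => 1 + ∑ i, ω i k) c = W (fun _ => 1) c + ∑ i, W (ω i) c := by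
  simp only [W, add_mul, Finset.sum_add_distrib, Finset.sum_mul]
  rw [Finset.sum_comm]

lemma W_sum_weight {α : Type} (s : Finset α) (ω : α → (Fin d → ι) → ℝ) (c : (Fin d → ι) → ℝ) :
    W (fun k => ∑ i ∈ s, ω i k) c = ∑ i ∈ s, W (ω i) c := by
  simp only [W, Finset.sum_mul]
  rw [Finset.sum_comm]

lemma W_sum_le (ω : (Fin d → ι) → ℝ) (h0 : ∀ k, 0 ≤ ω k) (v : Fin d → (Fin d → ι) → ℝ) :
    W ω (fun k => ∑ j, v j k) ≤ d * ∑ j, W ω (v j) := by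
  have : ∑ j, W ω (v j) = ∑ k, ω k * ∑ j, v j k ^ 2 := by
    simp only [W, Finset.mul_sum]
    rw [Finset.sum_comm]
  rw [this, Finset.mul_sum]
  refine Finset.sum_le_sum (fun k _ => ?_)
  have := sq_sum_le_card_mul_sum_sq (s := (Finset.univ : Finset (Fin d))) (f := fun j => v j k)
  simp only [Finset.card_univ, Fintype.card_fin] at this
  have := mul_le_mul_of_nonneg_left this (h0 k)
  linarith

lemma wt_pos (g : Good R l D) (k : Fin d → ι) : 1 ≤ wt l k := by
  have : 0 ≤ ∑ i, l (k i) := Finset.sum_nonneg (fun i _ => g.nonneg _)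
  unfold wt; linarith

lemma tensor_main (g : Good R l D) (e : (Fin d → ι) → ℝ)
    (horth : ∑ k, wt l k * e k * iterOp R (fun k => e k / wt l k) d k = 0) :
    ∑ k, e k ^ 2 ≤ d * (D * 4 ^ d) * ∑ k, wt l k * e k ^ 2 := by
  set z : (Fin d → ι) → ℝ := fun k => e k / wt l k with hz
  have wp : ∀ k : Fin d → ι, 0 < wt l k := fun k => lt_of_lt_of_le one_pos (wt_pos g k)
  set y := iterOp R z d with hy
  have tele : (fun k => ∑ j : Fin d, (iterOp R z j - iterOp R z (j + 1)) k) = z - y := by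
    funext k
    have := Finset.sum_range_sub' (fun j => iterOp R z j k) d
    rw [Finset.sum_range] at this
    simpa [iterOp] using this
  have b1 : W (wt l) (z - y) ≤ d * (D * 4 ^ d) * ∑ k, e k ^ 2 := by
    rw [← tele]
    refine (W_sum_le _ (fun k => (wp k).le) _).trans ?_
    rw [mul_assoc]
    refine mul_le_mul_of_nonneg_left ?_ (by positivity)
    have : ∀ j : Fin d, W (wt l) (iterOp R z j - iterOp R z (j + 1)) ≤
        D * 4 ^ d * W (fun k => l (k j) * wt l k) z := by
      intro j
      have e1 : W (wt l) (iterOp R z j - iterOp R z (j + 1)) = _ :=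
        W_add_weight (fun i k => l (k i)) (iterOp R z j - iterOp R z (j + 1))
      have e2 : W (fun k => l (k j) * wt l k) z =
          W (fun k => l (k j)) z + ∑ i, W (fun k => l (k i) * l (k j)) z := by
        rw [← W_sum_weight]
        simp only [W, wt, ← Finset.sum_add_distrib]
        refine Finset.sum_congr rfl (fun k _ => ?_)
        rw [← Finset.sum_mul]; ring
      rw [e1, e2, mul_add, Finset.mul_sum]
      refine add_le_add ?_ (Finset.sum_le_sum (fun i _ => ?_))
      · rw [mul_assoc]; exact diff0 g z j
      · rw [mul_assoc]; exact diff1 g z i j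
    refine (Finset.sum_le_sum (fun j _ => this j)).trans ?_
    rw [← Finset.mul_sum]
    have hD := g.Dnn
    refine mul_le_mul_of_nonneg_left ?_ (by positivity)
    rw [← W_sum_weight]
    unfold W
    refine Finset.sum_le_sum (fun k _ => ?_)
    beta_reduce
    rw [← Finset.sum_mul]
    have h1 : (∑ j, l (k j)) = wt l k - 1 := by simp [wt]
    rw [h1]
    have h2 : z k * wt l k = e k := by simp only [hz]; field_simp [(wp k).ne']
    rw [← h2]
    nlinarith [wp k, sq_nonneg (z k), mul_nonneg (wp k).le (sq_nonneg (z k))]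
  have b2 : ∑ k, e k ^ 2 = ∑ k, wt l k * e k * (z - y) k := by
    have : ∀ k, wt l k * e k * (z - y) k = e k ^ 2 - wt l k * e k * y k := by
      intro k
      have h2 : z k * wt l k = e k := by simp only [hz]; field_simp [(wp k).ne']
      rw [Pi.sub_apply]
      linear_combination e k * h2
    simp only [this, Finset.sum_sub_distrib, horth, sub_zero]
  have b3 : (∑ k, e k ^ 2) ^ 2 ≤ (∑ k, wt l k * e k ^ 2) * W (wt l) (z - y) := by
    rw [b2]
    refine Finset.sum_sq_le_sum_mul_sum_of_sq_le_mul _ (fun k _ => ?_) (fun k _ => ?_) (fun k _ => ?_)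
    · exact mul_nonneg (wp k).le (sq_nonneg _)
    · exact mul_nonneg (wp k).le (sq_nonneg _)
    · exact le_of_eq (by ring)
  have e0 : 0 ≤ ∑ k, e k ^ 2 := Finset.sum_nonneg (fun k _ => sq_nonneg _)
  have a0 : 0 ≤ ∑ k, wt l k * e k ^ 2 :=
    Finset.sum_nonneg (fun k _ => mul_nonneg (wp k).le (sq_nonneg _))
  rcases e0.eq_or_lt with h | h
  · rw [← h]
    have hD := g.Dnn
    positivity
  · have := b3.trans (mul_le_mul_of_nonneg_left b1 a0)
    refine le_of_mul_le_mul_right ?_ h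
    nlinarith

end tensor
end SplineMG

namespace SplineMG

section abs
variable {H V : Type*} [NormedAddCommGroup H] [InnerProductSpace ℝ H]
  [AddCommGroup V] [Module ℝ V]

local notation "⟪" x "," y "⟫" => inner ℝ x y

lemma orth_bound (one : H) (K : H →ₗ[ℝ] H)
    (hK : ∀ f g, ⟪K f, g⟫ + ⟪f, K g⟫ = ⟪f, one⟫ * ⟪g, one⟫)
    (X : Submodule ℝ H) (h1 : one ∈ X) (δ : ℝ)
    (hX : ∀ f, ∃ x ∈ X, ‖K f - x‖ ≤ δ * ‖f‖) (hδ : 0 ≤ δ)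
    (r : H) (hr : ∀ x ∈ X, ⟪r, x⟫ = 0) : ‖K r‖ ≤ δ * ‖r‖ := by
  obtain ⟨x, hx, hb⟩ := hX (K r)
  have h2 := hK r (K r)
  rw [hr one h1, zero_mul] at h2
  have h3 : ‖K r‖ ^ 2 = - ⟪r, K (K r) - x⟫ := by
    rw [inner_sub_right, hr x hx, ← real_inner_self_eq_norm_sq]; linarith
  have h4 := abs_real_inner_le_norm r (K (K r) - x)
  have h5 : ‖K r‖ ^ 2 ≤ ‖r‖ * (δ * ‖K r‖) := by
    rw [h3]
    exact (neg_le_abs _).trans (h4.trans (mul_le_mul_of_nonneg_left hb (norm_nonneg _)))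
  rcases (norm_nonneg (K r)).eq_or_lt with h | h
  · rw [← h]; positivity
  · refine le_of_mul_le_mul_right ?_ h
    nlinarith

/-- iterated spaces -/
def XX (one : H) (K : H →ₗ[ℝ] H) (X0 : Submodule ℝ H) : ℕ → Submodule ℝ H
  | 0 => X0
  | q + 1 => (ℝ ∙ one) ⊔ (XX one K X0 q).map K

lemma XX_fin (one : H) (K : H →ₗ[ℝ] H) (X0 : Submodule ℝ H) [FiniteDimensional ℝ X0] (q : ℕ) :
    FiniteDimensional ℝ (XX one K X0 q) := by
  induction q with
  | zero => simpa [XX]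
  | succ q ih => 
    change FiniteDimensional ℝ ↥((ℝ ∙ one) ⊔ (XX one K X0 q).map K)
    infer_instance

lemma XX_one (one : H) (K : H →ₗ[ℝ] H) (X0 : Submodule ℝ H) (h1 : one ∈ X0) (q : ℕ) :
    one ∈ XX one K X0 q := by
  cases q with
  | zero => simpa [XX]
  | succ q => exact Submodule.mem_sup_left (Submodule.mem_span_singleton_self _)

lemma XX_approx (one : H) (K : H →ₗ[ℝ] H)
    (hK : ∀ f g, ⟪K f, g⟫ + ⟪f, K g⟫ = ⟪f, one⟫ * ⟪g, one⟫)
    (X0 : Submodule ℝ H) [FiniteDimensional ℝ X0] (h1 : one ∈ X0) (δ : ℝ) (hδ : 0 ≤ δ)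
    (hX : ∀ f, ∃ x ∈ X0, ‖K f - x‖ ≤ δ * ‖f‖) (q : ℕ) :
    ∀ f, ∃ x ∈ XX one K X0 q, ‖K f - x‖ ≤ δ * ‖f‖ := by
  induction q with
  | zero => simpa [XX]
  | succ q ih =>
    intro f
    have := XX_fin one K X0 q
    set X := XX one K X0 q
    refine ⟨K (X.starProjection f), Submodule.mem_sup_right
      (Submodule.mem_map_of_mem (Submodule.starProjection_apply_mem _ _)), ?_⟩
    rw [← map_sub]
    refine (orth_bound one K hK X (XX_one one K X0 h1 q) δ ih hδ _
      (fun x hx => Submodule.starProjection_inner_eq_zero _ _ hx)).trans ?_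
    refine mul_le_mul_of_nonneg_left ?_ hδ
    have h := Submodule.starProjection_inner_eq_zero (K := X) f _
      (Submodule.starProjection_apply_mem X f)
    have h2 : ‖f‖ ^ 2 = ‖f - X.starProjection f‖ ^ 2 + ‖X.starProjection f‖ ^ 2 := by
      have := norm_add_sq_real (f - X.starProjection f) (X.starProjection f)
      rw [h] at this
      simpa using this
    exact le_of_abs_le (abs_le_of_sq_le_sq (by nlinarith [sq_nonneg ‖X.starProjection f‖]) (norm_nonneg _))

lemma sim_diag [FiniteDimensional ℝ V] (ι D : V →ₗ[ℝ] H) (hι : Function.Injective ι) :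
    ∃ (n : ℕ) (φ : Fin n → V) (l : Fin n → ℝ),
      (∀ w, w = ∑ a, ⟪ι (φ a), ι w⟫ • φ a) ∧
      (∀ a b, ⟪ι (φ a), ι (φ b)⟫ = if a = b then 1 else 0) ∧
      (∀ a b, ⟪D (φ a), D (φ b)⟫ = if a = b then l a else 0) := by
  let E := LinearEquiv.ofInjective ι hι
  let D1 : LinearMap.range ι →ₗ[ℝ] H := D ∘ₗ E.symm.toLinearMap
  let D2 : LinearMap.range ι →ₗ[ℝ] LinearMap.range D1 := D1.rangeRestrict
  let T : LinearMap.range ι →ₗ[ℝ] LinearMap.range ι := LinearMap.adjoint D2 ∘ₗ D2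
  have hT1 : ∀ x y, ⟪T x, y⟫ = ⟪D1 x, D1 y⟫ := by
    intro x y
    simp only [T, LinearMap.comp_apply, LinearMap.adjoint_inner_left]
    rfl
  have hT : T.IsSymmetric := by
    intro x y
    rw [hT1, real_inner_comm (T y) x, hT1, real_inner_comm]
  let b := hT.eigenvectorBasis rfl
  have hE : ∀ x, ι (E.symm x) = (x : H) := by
    intro x
    have := congrArg Subtype.val (E.apply_symm_apply x)
    simpa [E] using this
  have on : ∀ a c, ⟪b a, b c⟫ = if a = c then (1:ℝ) else 0 := by
    intro a c
    exact orthonormal_iff_ite.1 b.orthonormal a c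
  refine ⟨_, fun a => E.symm (b a), hT.eigenvalues rfl, ?_, ?_, ?_⟩
  · intro w
    apply hι
    rw [map_sum]
    simp only [map_smul, hE]
    have := congrArg Subtype.val (b.sum_repr' (E w))
    simp only [Submodule.coe_sum, Submodule.coe_smul] at this
    exact this.symm
  · intro a c
    simp only [hE]
    exact on a c
  · intro a c
    have h1 := hT1 (b a) (b c)
    have h2 : T (b a) = _ := hT.apply_eigenvectorBasis rfl a
    rw [h2] at h1
    simp only [D1, LinearMap.comp_apply] at h1
    have h3 : ∀ x, E.symm.toLinearMap x = E.symm x := fun _ => rfl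
    rw [h3, h3] at h1
    rw [← h1, inner_smul_left]
    have := on a c
    simp only [b] at this
    rw [this]
    simp

lemma oneD_abstract [FiniteDimensional ℝ V] (ι D : V →ₗ[ℝ] H) (hι : Function.Injective ι)
    (e0 : V →ₗ[ℝ] ℝ) (one : V) (Vc : Submodule ℝ V) (K : H →ₗ[ℝ] H)
    (hK : ∀ f g, ⟪K f, g⟫ + ⟪f, K g⟫ = ⟪f, ι one⟫ * ⟪g, ι one⟫)
    (hD1 : D one = 0) (hrep : ∀ w, ι w = e0 w • ι one + K (D w))
    (X : Submodule ℝ H) [FiniteDimensional ℝ X] (h1 : ι one ∈ X) (δ : ℝ) (hδ : 0 ≤ δ)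
    (hX : ∀ f, ∃ x ∈ X, ‖K f - x‖ ≤ δ * ‖f‖)
    (hlift : ∀ x ∈ X, ∀ c : ℝ, ∃ w ∈ Vc, D w = x ∧ e0 w = c) :
    ∃ (n : ℕ) (φ : Fin n → V) (l : Fin n → ℝ) (R : Fin n → Fin n → ℝ),
      (∀ w, w = ∑ a, ⟪ι (φ a), ι w⟫ • φ a) ∧
      (∀ a b, ⟪ι (φ a), ι (φ b)⟫ = if a = b then 1 else 0) ∧
      (∀ a b, ⟪D (φ a), D (φ b)⟫ = if a = b then l a else 0) ∧
      (∀ b, ∑ a, R a b • φ a ∈ Vc) ∧ Good R l (2 * δ ^ 2) := by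
  obtain ⟨n, φ, l, hspan, hM, hA⟩ := sim_diag ι D hι
  have hQ : ∀ b, ∃ w ∈ Vc, D w = X.starProjection (D (φ b)) ∧ e0 w = e0 (φ b) := fun b =>
    hlift _ (Submodule.starProjection_apply_mem _ _) _
  choose pφ hpc hpD hp0 using hQ
  let P : Fin n → Fin n → ℝ := fun a b => ⟪ι (φ a), ι (pφ b)⟫
  have hP : ∀ b, pφ b = ∑ a, P a b • φ a := fun b => hspan (pφ b)
  let T : (Fin n → ℝ) → V := fun x => ∑ a, x a • φ a
  have l0 : ∀ a, 0 ≤ l a := fun a => by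
    have := hA a a
    rw [if_pos rfl] at this
    rw [← this]; exact real_inner_self_nonneg
  have hTM : ∀ x y, ⟪ι (T x), ι (T y)⟫ = ∑ a, x a * y a := by
    intro x y
    simp only [T, map_sum, map_smul, sum_inner, inner_sum, inner_smul_left, inner_smul_right, hM]
    simp
    exact Finset.sum_congr rfl (fun a _ => by ring)
  have hTA : ∀ x y, ⟪D (T x), D (T y)⟫ = ∑ a, l a * x a * y a := by
    intro x y
    simp only [T, map_sum, map_smul, sum_inner, inner_sum, inner_smul_left, inner_smul_right, hA]
    simp
    exact Finset.sum_congr rfl (fun a _ => by ring)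
  have nM : ∀ x, ‖ι (T x)‖ ^ 2 = ∑ a, x a ^ 2 := by
    intro x; rw [← real_inner_self_eq_norm_sq, hTM]; simp [sq]
  have nA : ∀ x, ‖D (T x)‖ ^ 2 = ∑ a, l a * x a ^ 2 := by
    intro x; rw [← real_inner_self_eq_norm_sq, hTA]; simp [sq, mul_assoc]
  let Px : (Fin n → ℝ) → (Fin n → ℝ) := fun x a => ∑ b, P a b * x b
  have hPx : ∀ x, T (Px x) = ∑ b, x b • pφ b := by
    intro x
    simp only [T, Px, hP, Finset.smul_sum, Finset.sum_smul, smul_smul]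
    rw [Finset.sum_comm]
    simp only [mul_comm]
  have hDP : ∀ x, D (T (Px x)) = X.starProjection (D (T x)) := by
    intro x
    rw [hPx]
    simp only [T, map_sum, map_smul, hpD]
  have h0P : ∀ x, e0 (T (Px x)) = e0 (T x) := by
    intro x
    rw [hPx]
    simp only [T, map_sum, map_smul, hp0]
  have Tsub : ∀ x y, T x - T y = T (x - y) := by
    intro x y; simp [T, sub_smul]
  -- residual
  have hres : ∀ x, D (T (x - Px x)) = D (T x) - X.starProjection (D (T x)) := by
    intro x; rw [← Tsub, map_sub, hDP]
  have horth : ∀ x, ∀ y ∈ X, ⟪D (T (x - Px x)), y⟫ = 0 := by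
    intro x y hy; rw [hres]; exact Submodule.starProjection_inner_eq_zero _ _ hy
  have hpyth : ∀ x, ‖D (T x)‖ ^ 2 = ‖D (T (x - Px x))‖ ^ 2 + ‖D (T (Px x))‖ ^ 2 := by
    intro x
    have h := horth x (D (T (Px x))) (by rw [hDP]; exact Submodule.starProjection_apply_mem _ _)
    have := norm_add_sq_real (D (T (x - Px x))) (D (T (Px x)))
    rw [h, ← map_add] at this
    have e : T (x - Px x) + T (Px x) = T x := by rw [← Tsub]; abel
    rw [e] at this
    linarith
  -- L2 approximation
  have p0 : ∀ x, ∑ a, (x a - Px x a) ^ 2 ≤ δ ^ 2 * ∑ a, l a * x a ^ 2 := by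
    intro x
    have h2 : ι (T (x - Px x)) = K (D (T (x - Px x))) := by
      have := hrep (T (x - Px x))
      rw [← Tsub, map_sub e0, h0P, sub_self, zero_smul, zero_add] at this
      rw [← Tsub]; exact this
    have h3 := orth_bound (ι one) K hK X h1 δ hX hδ _ (horth x)
    rw [← h2] at h3
    have h4 := pow_le_pow_left₀ (norm_nonneg _) h3 2
    rw [mul_pow, nM] at h4
    refine h4.trans (mul_le_mul_of_nonneg_left ?_ (sq_nonneg _))
    rw [← nA, hpyth x]
    nlinarith [sq_nonneg ‖D (T (Px x))‖]
  have p1 : ∀ x, ∑ a, l a * (x a - Px x a) ^ 2 ≤ δ ^ 2 * ∑ a, l a ^ 2 * x a ^ 2 := by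
    intro x
    set L : Fin n → ℝ := fun a => l a * x a with hL
    have hLw : ∀ v, ⟪D (T x), D v⟫ = ⟪ι (T L), ι v⟫ := by
      intro v
      have hv : v = T (fun a => ⟪ι (φ a), ι v⟫) := hspan v
      rw [hv, hTA, hTM]
    set r := T (x - Px x) with hr
    obtain ⟨y, hy, hb⟩ := hX (ι (T L))
    have e1 : ⟪ι (T L), ι one⟫ = 0 := by rw [← hLw, hD1, inner_zero_right]
    have e2 : ‖D r‖ ^ 2 = ⟪D (T x), D r⟫ := by
      rw [← real_inner_self_eq_norm_sq]
      have := horth x (D (T (Px x))) (by rw [hDP]; exact Submodule.starProjection_apply_mem _ _)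
      have e : D (T x) = D r + D (T (Px x)) := by
        rw [← map_add, hr, ← Tsub]; congr 1; abel
      rw [e, inner_add_left, real_inner_comm (D r) (D (T (Px x))), this, add_zero]
    have e3 : ⟪D (T x), D r⟫ = - ⟪D r, K (ι (T L)) - y⟫ := by
      rw [inner_sub_right, horth x y hy, hLw, hrep r, inner_add_right, inner_smul_right, e1]
      have := hK (ι (T L)) (D r)
      rw [e1, zero_mul] at this
      rw [real_inner_comm (K (ι (T L))) (D r)]
      linarith
    have h4 := abs_real_inner_le_norm (D r) (K (ι (T L)) - y)
    have h5 : ‖D r‖ ^ 2 ≤ ‖D r‖ * (δ * ‖ι (T L)‖) := by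
      rw [e2, e3]
      exact (neg_le_abs _).trans (h4.trans (mul_le_mul_of_nonneg_left hb (norm_nonneg _)))
    have h6 : ‖D r‖ ≤ δ * ‖ι (T L)‖ := by
      rcases (norm_nonneg (D r)).eq_or_lt with h | h
      · rw [← h]; positivity
      · refine le_of_mul_le_mul_right ?_ h
        nlinarith
    have h7 := pow_le_pow_left₀ (norm_nonneg _) h6 2
    rw [mul_pow, nM, hr, nA] at h7
    simpa [hL, mul_pow] using h7
  have p2 : ∀ x, ∑ a, l a * (Px x a) ^ 2 ≤ ∑ a, l a * x a ^ 2 := by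
    intro x
    rw [← nA, ← nA, hpyth x]
    nlinarith [sq_nonneg ‖D (T (x - Px x))‖]
  -- truncation
  let ch : Fin n → ℝ := fun a => if l a * δ ^ 2 ≤ 1 then 1 else 0
  let R : Fin n → Fin n → ℝ := fun a b => P a b * ch b
  have ch01 : ∀ a, ch a = 0 ∨ ch a = 1 := by
    intro a; simp only [ch]; split_ifs <;> simp
  have hR : ∀ (x : Fin n → ℝ) (a : Fin n), ∑ b, R a b * x b = Px (fun b => ch b * x b) a := by
    intro x a; simp only [R, Px, mul_assoc]
  have δ0 : 0 ≤ δ ^ 2 := sq_nonneg _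
  refine ⟨n, φ, l, R, hspan, hM, hA, ?_, ⟨l0, by positivity, ?_, ?_, ?_, ?_⟩⟩
  · intro b
    have : ∑ a, R a b • φ a = ch b • pφ b := by
      rw [hP b, Finset.smul_sum]
      refine Finset.sum_congr rfl (fun a _ => ?_)
      rw [smul_smul, mul_comm]
    rw [this]
    exact Vc.smul_mem _ (hpc b)
  · intro x
    simp only [hR]
    set y : Fin n → ℝ := fun b => ch b * x b with hy
    have h2 := p0 y
    have h3 : ∑ a, (Px y a) ^ 2 ≤ 2 * ∑ a, y a ^ 2 + 2 * ∑ a, (y a - Px y a) ^ 2 := by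
      rw [Finset.mul_sum, Finset.mul_sum, ← Finset.sum_add_distrib]
      refine Finset.sum_le_sum (fun a _ => ?_)
      nlinarith [sq_nonneg (2 * y a - Px y a)]
    have h4 : δ ^ 2 * ∑ a, l a * y a ^ 2 ≤ ∑ a, x a ^ 2 := by
      rw [Finset.mul_sum]
      refine Finset.sum_le_sum (fun a _ => ?_)
      simp only [hy, ch]
      split_ifs with h
      · nlinarith [sq_nonneg (x a)]
      · simpa using sq_nonneg (x a)
    have h5 : ∑ a, y a ^ 2 ≤ ∑ a, x a ^ 2 := by
      refine Finset.sum_le_sum (fun a _ => ?_)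
      rcases ch01 a with h | h <;> simp [hy, h, sq_nonneg]
    linarith
  · intro x
    simp only [hR]
    refine (p2 _).trans ?_
    have : 0 ≤ ∑ a, l a * x a ^ 2 := Finset.sum_nonneg (fun a _ => mul_nonneg (l0 a) (sq_nonneg _))
    have h5 : ∑ a, l a * (ch a * x a) ^ 2 ≤ ∑ a, l a * x a ^ 2 := by
      refine Finset.sum_le_sum (fun a _ => ?_)
      rcases ch01 a with h | h <;> simp [h, mul_nonneg (l0 a) (sq_nonneg (x a))]
    linarith
  · intro x
    simp only [hR]
    set y : Fin n → ℝ := fun b => ch b * x b with hy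
    have h2 := p0 y
    have h3 : ∑ a, (x a - Px y a) ^ 2 ≤ 2 * ∑ a, (x a - y a) ^ 2 + 2 * ∑ a, (y a - Px y a) ^ 2 := by
      rw [Finset.mul_sum, Finset.mul_sum, ← Finset.sum_add_distrib]
      refine Finset.sum_le_sum (fun a _ => ?_)
      nlinarith [sq_nonneg (x a - 2 * y a + Px y a)]
    have h4 : ∑ a, (x a - y a) ^ 2 + δ ^ 2 * ∑ a, l a * y a ^ 2 ≤ δ ^ 2 * ∑ a, l a * x a ^ 2 := by
      rw [Finset.mul_sum, Finset.mul_sum, ← Finset.sum_add_distrib]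
      refine Finset.sum_le_sum (fun a _ => ?_)
      simp only [hy, ch]
      split_ifs with h
      · apply le_of_eq; ring
      · nlinarith [sq_nonneg (x a)]
    linarith
  · intro x
    simp only [hR]
    set y : Fin n → ℝ := fun b => ch b * x b with hy
    have h2 := p1 y
    have h3 : ∑ a, l a * (x a - Px y a) ^ 2 ≤
        2 * ∑ a, l a * (x a - y a) ^ 2 + 2 * ∑ a, l a * (y a - Px y a) ^ 2 := by
      rw [Finset.mul_sum, Finset.mul_sum, ← Finset.sum_add_distrib]
      refine Finset.sum_le_sum (fun a _ => ?_)
      nlinarith [mul_nonneg (l0 a) (sq_nonneg (x a - 2 * y a + Px y a))]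
    have h4 : ∑ a, l a * (x a - y a) ^ 2 + δ ^ 2 * ∑ a, l a ^ 2 * y a ^ 2 ≤
        δ ^ 2 * ∑ a, l a ^ 2 * x a ^ 2 := by
      rw [Finset.mul_sum, Finset.mul_sum, ← Finset.sum_add_distrib]
      refine Finset.sum_le_sum (fun a _ => ?_)
      simp only [hy, ch]
      split_ifs with h
      · apply le_of_eq; ring
      · push Not at h
        have := mul_nonneg (l0 a) (sq_nonneg (x a))
        nlinarith
    linarith

end abs
end SplineMG

namespace SplineMG

/-- Lebesgue measure on the unit interval -/
def mu1 : Measure ℝ := volume.restrict (Ioo (0:ℝ) 1)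

instance : IsProbabilityMeasure mu1 := ⟨by simp [mu1]⟩
instance : NullSingletonClass mu1 := by unfold mu1; infer_instance

abbrev HH := Lp ℝ 2 mu1

local notation "⟪" x "," y "⟫" => inner ℝ x y

def prim (f : ℝ → ℝ) (x : ℝ) : ℝ := ∫ t in Iio x, f t ∂mu1

lemma HH_int (f : HH) : Integrable f mu1 := (Lp.memLp f).integrable (by norm_num)

lemma prim_congr {f g : ℝ → ℝ} (h : f =ᵐ[mu1] g) : prim f = prim g := by
  funext x
  exact integral_congr_ae (ae_restrict_of_ae h)

lemma prim_bound (f : ℝ → ℝ) (hf : Integrable f mu1) (x : ℝ) : ‖prim f x‖ ≤ ∫ t, ‖f t‖ ∂mu1 :=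
  (norm_integral_le_integral_norm _).trans
    (setIntegral_le_integral hf.norm (Filter.Eventually.of_forall fun _ => norm_nonneg _))

lemma prim_sm (f : ℝ → ℝ) (hf : AEStronglyMeasurable f mu1) : StronglyMeasurable (prim f) := by
  rw [prim_congr hf.ae_eq_mk]
  have : prim (hf.mk f) = fun x => ∫ t, (Iio x).indicator (hf.mk f) t ∂mu1 := by
    funext x; simp [prim, integral_indicator measurableSet_Iio]
  rw [this]
  apply StronglyMeasurable.integral_prod_right
  have h2 : Function.uncurry (fun x t => (Iio x).indicator (hf.mk f) t) =
      ({p : ℝ × ℝ | p.2 < p.1}).indicator (fun p => hf.mk f p.2) := by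
    funext p; simp [Function.uncurry, indicator]
  rw [h2]
  exact (hf.stronglyMeasurable_mk.comp_measurable measurable_snd).indicator
    (measurableSet_lt measurable_snd measurable_fst)

lemma prim_memLp (f : ℝ → ℝ) (hf : Integrable f mu1) : MemLp (prim f) 2 mu1 :=
  MemLp.of_bound (prim_sm f hf.1).aestronglyMeasurable _
    (Filter.Eventually.of_forall (prim_bound f hf))

def KK : HH →ₗ[ℝ] HH where
  toFun f := (prim_memLp f (HH_int f)).toLp _
  map_add' f g := by
    rw [← MemLp.toLp_add]
    apply MemLp.toLp_congr
    have : prim ↑↑(f + g) = prim f + prim g := by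
      rw [prim_congr (Lp.coeFn_add f g)]
      funext x
      simp only [prim, Pi.add_apply]
      exact integral_add (HH_int f).integrableOn (HH_int g).integrableOn
    rw [this]
  map_smul' c f := by
    rw [RingHom.id_apply, ← MemLp.toLp_const_smul]
    apply MemLp.toLp_congr
    have : prim ↑↑(c • f) = c • prim f := by
      rw [prim_congr (Lp.coeFn_smul c f)]
      funext x
      simp only [prim, Pi.smul_apply]
      exact integral_smul _ _
    rw [this]

lemma KK_coe (f : HH) : (KK f : ℝ → ℝ) =ᵐ[mu1] prim f :=
  MemLp.coeFn_toLp (prim_memLp f (HH_int f))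

def oneH : HH := (memLp_const (1:ℝ)).toLp _

lemma oneH_coe : (oneH : ℝ → ℝ) =ᵐ[mu1] fun _ => 1 := MemLp.coeFn_toLp _

lemma inner_eq (f g : HH) : ⟪f, g⟫ = ∫ x, f x * g x ∂mu1 := by
  rw [L2.inner_def]
  refine integral_congr_ae (Filter.Eventually.of_forall fun x => ?_)
  simp [mul_comm]

lemma inner_one (f : HH) : ⟪f, oneH⟫ = ∫ x, f x ∂mu1 := by
  rw [inner_eq]
  refine integral_congr_ae ?_
  filter_upwards [oneH_coe] with x hx
  rw [hx, mul_one]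

lemma KK_adj (f g : HH) : ⟪KK f, g⟫ + ⟪f, KK g⟫ = ⟪f, oneH⟫ * ⟪g, oneH⟫ := by
  have hf := HH_int f
  have hg := HH_int g
  have e1 : ⟪KK f, g⟫ = ∫ x, g x * prim f x ∂mu1 := by
    rw [inner_eq]
    refine integral_congr_ae ?_
    filter_upwards [KK_coe f] with x hx
    rw [hx, mul_comm]
  have e2 : ⟪f, KK g⟫ = ∫ x, f x * prim g x ∂mu1 := by
    rw [inner_eq]
    refine integral_congr_ae ?_
    filter_upwards [KK_coe g] with x hx
    rw [hx]
  have e3 : ∫ x, f x * prim g x ∂mu1 = ∫ t, g t * (∫ x, f x ∂mu1 - prim f t) ∂mu1 := by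
    have h1 : ∀ x, f x * prim g x = ∫ t, (if t < x then f x * g t else 0) ∂mu1 := by
      intro x
      unfold prim
      rw [← integral_indicator measurableSet_Iio, ← integral_const_mul]
      refine integral_congr_ae (Filter.Eventually.of_forall fun t => ?_)
      by_cases h : t < x <;> simp [h]
    simp only [h1]
    rw [integral_integral_swap]
    · refine integral_congr_ae (Filter.Eventually.of_forall fun t => ?_)
      have h2 := integral_add_compl (s := Iio t) measurableSet_Iio hf
      rw [compl_Iio, integral_Ici_eq_integral_Ioi] at h2
      have h3 : ∫ x, f x ∂mu1 - prim f t = ∫ x in Ioi t, f x ∂mu1 := by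
        unfold prim; linarith
      beta_reduce
      rw [h3, ← integral_indicator measurableSet_Ioi, ← integral_const_mul]
      refine integral_congr_ae (Filter.Eventually.of_forall fun x => ?_)
      by_cases h : t < x <;> simp [h, mul_comm]
    · have h4 : Function.uncurry (fun x t => if t < x then f x * g t else 0) =
        ({p : ℝ × ℝ | p.2 < p.1}).indicator (fun p => f p.1 * g p.2) := by
        funext p; simp [Function.uncurry, indicator]
      rw [h4]
      exact (hf.mul_prod hg).indicator (measurableSet_lt measurable_snd measurable_fst)
  rw [e1, e2, e3, inner_one, inner_one, ← integral_add]
  · rw [← integral_const_mul]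
    refine integral_congr_ae (Filter.Eventually.of_forall fun t => ?_)
    ring
  · exact hg.mul_bdd (c := ∫ t, ‖f t‖ ∂mu1) (prim_sm f hf.1).aestronglyMeasurable
      (Filter.Eventually.of_forall (prim_bound f hf))
  · simp only [mul_sub]
    exact (hg.mul_const _).sub (hg.mul_bdd (c := ∫ t, ‖f t‖ ∂mu1) (prim_sm f hf.1).aestronglyMeasurable
      (Filter.Eventually.of_forall (prim_bound f hf)))

lemma prim_eq_interval (f : ℝ → ℝ) (x : ℝ) (hx : x ∈ Ioo (0:ℝ) 1) :
    prim f x = ∫ t in (0:ℝ)..x, f t := by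
  unfold prim mu1
  rw [Measure.restrict_restrict measurableSet_Iio, intervalIntegral.integral_of_le hx.1.le,
    integral_Ioc_eq_integral_Ioo]
  have : Iio x ∩ Ioo (0:ℝ) 1 = Ioo 0 x := by
    ext t; simp only [mem_inter_iff, mem_Iio, mem_Ioo]
    constructor
    · rintro ⟨a, b, c⟩; exact ⟨b, a⟩
    · rintro ⟨a, b⟩; exact ⟨b, a, b.trans hx.2⟩
  rw [this]

/-- half-open pieces -/
def Ij (M j : ℕ) : Set ℝ := Ico ((j:ℝ) / M) (((j:ℝ) + 1) / M)

lemma Ij_unique (M : ℕ) (hM : 1 ≤ M) (t : ℝ) (ht : t ∈ Ioo (0:ℝ) 1) :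
    ∃ j : Fin M, ∀ i : Fin M, t ∈ Ij M i ↔ i = j := by
  have hM' : (0:ℝ) < M := by exact_mod_cast hM
  have h0 : 0 ≤ t * M := by have := ht.1; positivity
  have key : ∀ i : ℕ, t ∈ Ij M i ↔ ⌊t * M⌋₊ = i := by
    intro i
    rw [Nat.floor_eq_iff h0, Ij, mem_Ico, div_le_iff₀ hM', lt_div_iff₀ hM']
  have hlt : ⌊t * M⌋₊ < M := by
    rw [Nat.floor_lt h0]
    have := ht.2
    nlinarith
  refine ⟨⟨_, hlt⟩, fun i => ?_⟩
  rw [key, Fin.ext_iff]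
  exact eq_comm

lemma Ij_meas (M j : ℕ) : MeasurableSet (Ij M j) := measurableSet_Ico

lemma sum_Ij (M : ℕ) (t : ℝ) (j : Fin M) (hj : ∀ i : Fin M, t ∈ Ij M i ↔ i = j)
    (F : Fin M → ℝ → ℝ) : ∑ i : Fin M, (Ij M i).indicator (F i) t = F j t := by
  classical
  simp only [indicator_apply, hj]
  simp

def ind (M : ℕ) (j : Fin M) : HH := indicatorConstLp 2 (Ij_meas M j) (measure_ne_top mu1 _) (1:ℝ)

def X0 (M : ℕ) : Submodule ℝ HH := Submodule.span ℝ (range (ind M))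

instance (M : ℕ) : FiniteDimensional ℝ (X0 M) := 
  FiniteDimensional.span_of_finite ℝ (finite_range _)

lemma sum_ind_coe (M : ℕ) (c : Fin M → ℝ) :
    ((∑ j, c j • ind M j : HH) : ℝ → ℝ) =ᵐ[mu1] fun t => ∑ j : Fin M, (Ij M j).indicator (fun _ => c j) t := by
  have h1 := Lp.coeFn_fun_finsetSum (Finset.univ) (fun j => c j • ind M j)
  have h2 : ∀ᵐ t ∂mu1, ∀ j, (c j • ind M j : HH) t = c j * ind M j t := by
    rw [ae_all_iff]; intro j
    filter_upwards [Lp.coeFn_smul (c j) (ind M j)] with t ht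
    simpa using ht
  have h3 : ∀ᵐ t ∂mu1, ∀ j, ind M j t = (Ij M j).indicator (fun _ => (1:ℝ)) t := by
    rw [ae_all_iff]; intro j
    exact indicatorConstLp_coeFn
  filter_upwards [h1, h2, h3] with t t1 t2 t3
  rw [t1]
  refine Finset.sum_congr rfl (fun j _ => ?_)
  rw [t2, t3]
  by_cases h : t ∈ Ij M j <;> simp [h]

lemma ae_mu1 : ∀ᵐ t ∂mu1, t ∈ Ioo (0:ℝ) 1 := ae_restrict_mem measurableSet_Ioo

lemma X0_one (M : ℕ) (hM : 1 ≤ M) : oneH ∈ X0 M := by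
  have : oneH = ∑ j, (1:ℝ) • ind M j := by
    apply Lp.ext
    filter_upwards [oneH_coe, sum_ind_coe M (fun _ => 1), ae_mu1] with t t1 t2 t3
    obtain ⟨j, hj⟩ := Ij_unique M hM t t3
    rw [t1, t2, sum_Ij M t j hj (fun _ _ => 1)]
  rw [this]
  exact Submodule.sum_mem _ (fun j _ => Submodule.smul_mem _ _ (Submodule.subset_span ⟨j, rfl⟩))

lemma cs_set (ν : Measure ℝ) [IsFiniteMeasure ν] (f : ℝ → ℝ) (hf : Integrable f ν)
    (hf2 : Integrable (fun x => f x ^ 2) ν) (η : ℝ) (hη : 0 < η) (hν : ν.real univ ≤ η) :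
    (∫ x, f x ∂ν) ^ 2 ≤ η * ∫ x, f x ^ 2 ∂ν := by
  set I := ∫ x, f x ∂ν
  set B := ∫ x, f x ^ 2 ∂ν
  have h : 0 ≤ ∫ x, (f x ^ 2 - 2 * (I / η) * f x + (I / η) ^ 2) ∂ν := by
    refine integral_nonneg (fun x => ?_)
    have : f x ^ 2 - 2 * (I / η) * f x + (I / η) ^ 2 = (f x - I / η) ^ 2 := by ring
    beta_reduce
    rw [this]; exact sq_nonneg _
  have i1 : Integrable (fun x => 2 * (I / η) * f x) ν := hf.const_mul _
  have i2 : Integrable (fun x => f x ^ 2 - 2 * (I / η) * f x) ν := hf2.sub i1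
  have h0 : ∫ x, (f x ^ 2 - 2 * (I / η) * f x + (I / η) ^ 2) ∂ν =
      B - 2 * (I / η) * I + ν.real univ * (I / η) ^ 2 := by
    rw [integral_add i2 (integrable_const _), integral_sub hf2 i1, integral_const_mul,
      integral_const, smul_eq_mul]
  rw [h0] at h
  have h1 : ν.real univ * (I / η) ^ 2 ≤ η * (I / η) ^ 2 :=
    mul_le_mul_of_nonneg_right hν (sq_nonneg _)
  have h2 : 0 ≤ B - 2 * (I / η) * I + η * (I / η) ^ 2 := by
    linarith
  have h3 : B - 2 * (I / η) * I + η * (I / η) ^ 2 = B - I ^ 2 / η := by field_simp; ring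
  rw [h3] at h2
  have h4 : I ^ 2 / η ≤ B := by linarith
  rw [div_le_iff₀ hη] at h4
  linarith

lemma X0_approx (M : ℕ) (hM : 1 ≤ M) (f : HH) :
    ∃ x ∈ X0 M, ‖KK f - x‖ ≤ (1 / (M:ℝ)) * ‖f‖ := by
  have hM' : (0:ℝ) < M := by exact_mod_cast hM
  refine ⟨∑ j : Fin M, (prim f ((j:ℝ) / M)) • ind M j, Submodule.sum_mem _ (fun j _ =>
    Submodule.smul_mem _ _ (Submodule.subset_span ⟨j, rfl⟩)), ?_⟩
  set x := ∑ j : Fin M, (prim f ((j:ℝ) / M)) • ind M j with hx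
  refine le_of_abs_le (abs_le_of_sq_le_sq ?_ (by positivity))
  rw [mul_pow, ← real_inner_self_eq_norm_sq, ← real_inner_self_eq_norm_sq, inner_eq, inner_eq]
  have hf := HH_int f
  have hf2 : Integrable (fun t => f t ^ 2) mu1 := (Lp.memLp f).integrable_sq
  have hIm : ∀ j : ℕ, mu1.real (Ij M j) ≤ 1 / M := by
    intro j
    have : mu1 (Ij M j) ≤ volume (Ij M j) := Measure.restrict_apply_le _ _
    have h2 : volume (Ij M j) = ENNReal.ofReal (1 / M) := by
      rw [Ij, Real.volume_Ico]; congr 1; field_simp; ring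
    rw [h2] at this
    exact ENNReal.toReal_le_of_le_ofReal (by positivity) this
  set A : Fin M → ℝ := fun j => ∫ t in Ij M j, f t ^ 2 ∂mu1 with hA
  have hA0 : ∀ j, 0 ≤ A j := fun j => integral_nonneg (fun t => sq_nonneg _)
  have pt : ∀ᵐ t ∂mu1, (KK f - x) t * (KK f - x) t ≤
      ∑ j : Fin M, (Ij M j).indicator (fun _ => 1 / (M:ℝ) * A j) t := by
    filter_upwards [KK_coe f, sum_ind_coe M (fun j => prim f ((j:ℝ) / M)), Lp.coeFn_sub (KK f) x,
      ae_mu1] with t t1 t2 t3 t4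
    obtain ⟨j, hj⟩ := Ij_unique M hM t t4
    rw [t3, Pi.sub_apply, t1, t2, sum_Ij M t j hj (fun j _ => prim f ((j:ℝ) / M)), 
      sum_Ij M t j hj (fun j _ => 1 / (M:ℝ) * A j), ← sq]
    have hm : t ∈ Ij M j := (hj j).2 rfl
    have h5 : prim f t - prim f ((j:ℝ) / M) = ∫ s in Ico ((j:ℝ) / M) t, f s ∂mu1 := by
      unfold prim
      have : Iio t = Iio ((j:ℝ) / M) ∪ Ico ((j:ℝ) / M) t := (Iio_union_Ico_eq_Iio hm.1).symm
      rw [this, setIntegral_union ?_ measurableSet_Ico hf.integrableOn hf.integrableOn]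
      · ring
      · rw [Set.disjoint_left]; intro s h1 h2; exact absurd h1 (not_lt.2 h2.1)
    rw [h5]
    have sub : Ico ((j:ℝ) / M) t ⊆ Ij M j := Ico_subset_Ico_right hm.2.le
    refine (cs_set _ f hf.integrableOn hf2.integrableOn (1 / M) (by positivity) ?_).trans ?_
    · rw [measureReal_restrict_apply_univ]
      exact (measureReal_mono sub).trans (hIm j)
    · refine mul_le_mul_of_nonneg_left ?_ (by positivity)
      exact setIntegral_mono_set hf2.integrableOn (Filter.Eventually.of_forall fun t => sq_nonneg _)
        (HasSubset.Subset.eventuallyLE sub)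
  have int1 : ∀ j : Fin M, Integrable ((Ij M j).indicator (fun _ => 1 / (M:ℝ) * A j)) mu1 :=
    fun j => (integrable_const _).indicator (Ij_meas M j)
  have i0 : Integrable (fun t => (KK f - x) t * (KK f - x) t) mu1 :=
    (Lp.memLp (KK f - x)).integrable_mul (Lp.memLp (KK f - x))
  refine (integral_mono_ae i0 (integrable_finsetSum _ (fun j _ => int1 j)) pt).trans ?_
  rw [integral_finsetSum _ (fun j _ => int1 j)]
  have s1 : ∑ j, A j = ∫ t, f t * f t ∂mu1 := by
    simp only [hA, ← integral_indicator (Ij_meas M _)]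
    rw [← integral_finsetSum _ (fun (j : Fin M) _ => hf2.indicator (Ij_meas M j))]
    refine integral_congr_ae ?_
    filter_upwards [ae_mu1] with t t4
    obtain ⟨j, hj⟩ := Ij_unique M hM t t4
    rw [sum_Ij M t j hj (fun j t => f t ^ 2), sq]
  rw [← s1, Finset.mul_sum]
  refine Finset.sum_le_sum (fun j _ => ?_)
  rw [integral_indicator (Ij_meas M j), setIntegral_const, smul_eq_mul]
  have := mul_le_mul_of_nonneg_right (hIm j) (mul_nonneg (by positivity : 0 ≤ 1 / (M:ℝ)) (hA0 j))
  linarith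

end SplineMG

namespace SplineMG

/-- open pieces -/
def opiece (M j : ℕ) : Set ℝ :=
  {x | (j = 0 ∨ (j:ℝ) / M < x) ∧ (j = M - 1 ∨ x < ((j:ℝ) + 1) / M)}

def knots (M : ℕ) : Set ℝ := range (fun i : ℕ => (i:ℝ) / M)

lemma knots_countable (M : ℕ) : (knots M).Countable := countable_range _

lemma knots_ae (M : ℕ) (μ : Measure ℝ) [NullSingletonClass μ] : ∀ᵐ x ∂μ, x ∉ knots M :=
  (knots_countable M).ae_notMem _

lemma mem_piece (M j : ℕ) (hj : j < M) (x : ℝ) : x ∈ pieceSet M j ↔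
    (j = 0 ∨ (j:ℝ) / M ≤ x) ∧ (j = M - 1 ∨ x ≤ ((j:ℝ) + 1) / M) := by
  have hM : (0:ℝ) < M := by exact_mod_cast (by omega : 0 < M)
  unfold pieceSet
  by_cases h0 : j = 0 <;> by_cases h1 : j = M - 1
  · have : (M:ℝ) = 1 := by exact_mod_cast (by omega : M = 1)
    simp only [h0, if_true, mem_union, mem_Iic, true_or, true_and]
    rw [if_pos (by omega)]
    simp only [this, mem_Ici]
    constructor
    · intro; left; omega
    · intro; rcases le_total x 1 with h | h
      · left; simpa using h
      · right; linarith
  · rw [if_pos h0, if_neg h1]; simp [h0, show ¬ (0 = M - 1) by omega]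
  · have : ((M:ℝ) - 1) = j := by
      rw [h1, Nat.cast_sub (by omega)]; simp
    rw [if_neg h0, if_pos h1, this]
    constructor
    · rintro (h | h)
      · exact ⟨Or.inr h.1, Or.inl h1⟩
      · exact ⟨Or.inr h, Or.inl h1⟩
    · intro h; right; exact h.1.resolve_left h0
  · rw [if_neg h0, if_neg h1]; simp [h0, h1]

lemma opiece_sub (M j : ℕ) (hj : j < M) : opiece M j ⊆ pieceSet M j := by
  intro x hx
  rw [mem_piece M j hj]
  exact ⟨hx.1.imp id le_of_lt, hx.2.imp id le_of_lt⟩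

lemma piece_diff (M j : ℕ) (hj : j < M) (x : ℝ) (hx : x ∈ pieceSet M j) (hk : x ∉ knots M) :
    x ∈ opiece M j := by
  rw [mem_piece M j hj] at hx
  refine ⟨hx.1.imp id fun h => lt_of_le_of_ne h fun h => hk ⟨j, h⟩,
    hx.2.imp id fun h => lt_of_le_of_ne h fun h => hk ⟨j + 1, ?_⟩⟩
  rw [h]; push_cast; rfl

lemma piece_cover (M : ℕ) (hM : 1 ≤ M) (x : ℝ) : ∃ j < M, x ∈ pieceSet M j := by
  have hM' : (0:ℝ) < M := by exact_mod_cast hM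
  by_cases h : ⌊x * M⌋₊ < M
  · refine ⟨_, h, ?_⟩
    rw [mem_piece _ _ h]
    constructor
    · by_cases h0 : ⌊x * M⌋₊ = 0
      · exact Or.inl h0
      · right
        rw [div_le_iff₀ hM']
        exact Nat.floor_le (Nat.pos_of_floor_pos (Nat.pos_of_ne_zero h0)).le
    · right
      rw [le_div_iff₀ hM']
      exact (Nat.lt_floor_add_one _).le
  · refine ⟨M - 1, by omega, ?_⟩
    rw [mem_piece _ _ (by omega)]
    refine ⟨Or.inr ?_, Or.inl rfl⟩
    rw [div_le_iff₀ hM']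
    have h2 : ((M - 1 : ℕ) : ℝ) ≤ (⌊x * M⌋₊ : ℝ) := by exact_mod_cast (by omega)
    have h3 : 0 < ⌊x * M⌋₊ := by omega
    exact h2.trans (Nat.floor_le (Nat.pos_of_floor_pos h3).le)

lemma opiece_cover (M : ℕ) (hM : 1 ≤ M) (x : ℝ) (hk : x ∉ knots M) : ∃ j < M, x ∈ opiece M j := by
  obtain ⟨j, hj, hx⟩ := piece_cover M hM x
  exact ⟨j, hj, piece_diff M j hj x hx hk⟩

lemma opiece_open (M j : ℕ) : IsOpen (opiece M j) := by
  exact IsOpen.inter (isOpen_const.union isOpen_Ioi) (isOpen_const.union isOpen_Iio)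

lemma piece_closed (M j : ℕ) : IsClosed (pieceSet M j) := by
  unfold pieceSet
  refine IsClosed.union ?_ ?_
  · split_ifs
    · exact isClosed_Iic
    · exact isClosed_Icc
  · split_ifs
    · exact isClosed_Ici
    · exact isClosed_empty

lemma opiece_unique (M i j : ℕ) (hi : i < M) (hj : j < M) (x : ℝ) (h1 : x ∈ opiece M i)
    (h2 : x ∈ opiece M j) : i = j := by
  have hM : (0:ℝ) < M := by exact_mod_cast (by omega : 0 < M)
  have key : ∀ i j : ℕ, i < M → j < M → x ∈ opiece M i → x ∈ opiece M j → ¬ i < j := by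
    intro i j hi hj h1 h2 hij
    have a := h1.2.resolve_left (by omega)
    have b := h2.1.resolve_left (by omega)
    have c : ((i:ℝ) + 1) / M ≤ j / M := by
      gcongr; exact_mod_cast hij
    linarith
  have := key i j hi hj h1 h2
  have := key j i hj hi h2 h1
  omega

lemma ordConn_piece (M j : ℕ) (hj : j < M) : OrdConnected (pieceSet M j) := by
  refine ⟨fun x hx y hy z hz => ?_⟩
  rw [mem_piece M j hj] at *
  exact ⟨hx.1.imp id fun h => h.trans hz.1, hy.2.imp id fun h => hz.2.trans h⟩

lemma exists_antideriv (q : ℕ) (P : Polynomial ℝ) (hP : P.natDegree ≤ q) :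
    ∃ Q : Polynomial ℝ, Q.natDegree ≤ q + 1 ∧ Q.derivative = P := by
  refine ⟨∑ i ∈ Finset.range (q + 1), Polynomial.monomial (i + 1) (P.coeff i / (i + 1)), ?_, ?_⟩
  · refine Polynomial.natDegree_sum_le_of_forall_le _ _ (fun i hi => ?_)
    refine (Polynomial.natDegree_monomial_le _).trans ?_
    have := Finset.mem_range.1 hi
    omega
  · rw [Polynomial.derivative_sum]
    conv_rhs => rw [P.as_sum_range_C_mul_X_pow' (n := q + 1) (by omega)]
    refine Finset.sum_congr rfl (fun i _ => ?_)
    rw [Polynomial.derivative_monomial, Polynomial.C_mul_X_pow_eq_monomial]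
    congr 1
    push_cast
    have : (i:ℝ) + 1 ≠ 0 := by positivity
    field_simp

/-- piecewise polynomial -/
def PP (M q : ℕ) (s : ℝ → ℝ) : Prop :=
  ∀ j < M, ∃ P : Polynomial ℝ, P.natDegree ≤ q ∧ ∀ x ∈ opiece M j, s x = P.eval x

lemma PP.mul {M q r : ℕ} {s t : ℝ → ℝ} (hs : PP M q s) (ht : PP M r t) :
    PP M (q + r) (fun x => s x * t x) := by
  intro j hj
  obtain ⟨P, h1, h2⟩ := hs j hj
  obtain ⟨Q, h3, h4⟩ := ht j hj
  refine ⟨P * Q, Polynomial.natDegree_mul_le.trans (by omega), fun x hx => ?_⟩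
  beta_reduce; rw [Polynomial.eval_mul, h2 x hx, h4 x hx]

lemma PP.add {M q : ℕ} {s t : ℝ → ℝ} (hs : PP M q s) (ht : PP M q t) :
    PP M q (fun x => s x + t x) := by
  intro j hj
  obtain ⟨P, h1, h2⟩ := hs j hj
  obtain ⟨Q, h3, h4⟩ := ht j hj
  refine ⟨P + Q, (Polynomial.natDegree_add_le _ _).trans (by omega), fun x hx => ?_⟩
  beta_reduce; rw [Polynomial.eval_add, h2 x hx, h4 x hx]

lemma PP.smul {M q : ℕ} {s : ℝ → ℝ} (c : ℝ) (hs : PP M q s) :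
    PP M q (fun x => c * s x) := by
  intro j hj
  obtain ⟨P, h1, h2⟩ := hs j hj
  refine ⟨Polynomial.C c * P, (Polynomial.natDegree_C_mul_le _ _).trans h1, fun x hx => ?_⟩
  beta_reduce; rw [Polynomial.eval_mul, h2 x hx, Polynomial.eval_C]

lemma PP.intble {M q : ℕ} (hM : 1 ≤ M) {s : ℝ → ℝ} (hs : PP M q s) (a b : ℝ) :
    IntervalIntegrable s volume a b := by
  rw [intervalIntegrable_iff]
  have h1 : IntegrableOn s (⋃ j ∈ Finset.range M, opiece M j ∩ uIoc a b) volume := by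
    rw [integrableOn_finset_iUnion]
    intro j hj
    obtain ⟨P, h1, h2⟩ := hs j (Finset.mem_range.1 hj)
    have h3 : IntegrableOn (fun x => P.eval x) (uIoc a b) volume := by
      rw [← intervalIntegrable_iff]
      exact P.continuous.intervalIntegrable _ _
    exact (h3.mono_set inter_subset_right).congr_fun (fun x hx => (h2 x hx.1).symm)
      ((opiece_open M j).measurableSet.inter measurableSet_uIoc)
  refine h1.mono_set_ae ?_
  filter_upwards [knots_ae M volume] with x hx hx2
  obtain ⟨j, hj, hxj⟩ := opiece_cover M hM x hx
  exact mem_biUnion (x := j) (by simpa using hj) ⟨hxj, hx2⟩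

lemma PP.integrable {M q : ℕ} (hM : 1 ≤ M) {s : ℝ → ℝ} (hs : PP M q s) : Integrable s mu1 := by
  have := (intervalIntegrable_iff_integrableOn_Ioc_of_le zero_le_one).1 (hs.intble hM 0 1)
  exact this.mono_set Ioo_subset_Ioc_self

lemma PP.memLp {M q : ℕ} (hM : 1 ≤ M) {s : ℝ → ℝ} (hs : PP M q s) : MemLp s 2 mu1 := by
  rw [memLp_two_iff_integrable_sq (hs.integrable hM).1]
  simp only [sq]
  exact (hs.mul hs).integrable hM

lemma IsSpline.pp {M p : ℕ} {u : ℝ → ℝ} (hu : IsSpline M p u) : PP M p u := by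
  intro j hj
  obtain ⟨P, h1, h2⟩ := hu.2 j hj
  exact ⟨P, h1, fun x hx => h2 x (opiece_sub M j hj hx)⟩

lemma PP.hasDeriv {M : ℕ} {s : ℝ → ℝ} {j : ℕ} {P : Polynomial ℝ}
    (h : ∀ x ∈ opiece M j, s x = P.eval x) (x : ℝ) (hx : x ∈ opiece M j) :
    HasDerivAt s (P.derivative.eval x) x := by
  refine (P.hasDerivAt x).congr_of_eventuallyEq ?_
  filter_upwards [(opiece_open M j).mem_nhds hx] with y hy using h y hy

lemma PP.deriv_pp {M q : ℕ} {s : ℝ → ℝ} (hs : PP M q s) : PP M (q - 1) (deriv s) := by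
  intro j hj
  obtain ⟨P, h1, h2⟩ := hs j hj
  exact ⟨P.derivative, (Polynomial.natDegree_derivative_le P).trans (by omega),
    fun x hx => (PP.hasDeriv h2 x hx).deriv⟩

lemma PP.diff {M q : ℕ} (hM : 1 ≤ M) {s : ℝ → ℝ} (hs : PP M q s) (x : ℝ) (hx : x ∉ knots M) :
    DifferentiableAt ℝ s x := by
  obtain ⟨j, hj, hxj⟩ := opiece_cover M hM x hx
  obtain ⟨P, h1, h2⟩ := hs j hj
  exact (PP.hasDeriv h2 x hxj).differentiableAt

lemma IsSpline.continuous {M p : ℕ} (hM : 1 ≤ M) {u : ℝ → ℝ} (hu : IsSpline M p u) :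
    Continuous u := by
  refine LocallyFinite.continuous (f := fun j : Fin M => pieceSet M j) (locallyFinite_of_finite _)
    ?_ (fun j => piece_closed M j) (fun j => ?_)
  · rw [eq_univ_iff_forall]; intro x
    obtain ⟨j, hj, hx⟩ := piece_cover M hM x
    exact mem_iUnion.2 ⟨⟨j, hj⟩, hx⟩
  · obtain ⟨P, _, h2⟩ := hu.2 j j.2
    exact P.continuous.continuousOn.congr (fun x hx => h2 x hx)

lemma IsSpline.ftc {M p : ℕ} (hM : 1 ≤ M) {u : ℝ → ℝ} (hu : IsSpline M p u) (x : ℝ) :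
    ∫ t in (0:ℝ)..x, deriv u t = u x - u 0 :=
  integral_eq_of_hasDerivAt_off_countable u (deriv u) (knots_countable M)
    (hu.continuous hM).continuousOn (fun x hx => (hu.pp.diff hM x hx.2).hasDerivAt)
    (hu.pp.deriv_pp.intble hM 0 x)

def Spl (M q : ℕ) (s : ℝ → ℝ) : Prop :=
  PP M q s ∧ (q ≠ 0 → Continuous s ∧ ContDiffOn ℝ (q - 1 : ℕ) s (Ioo 0 1))

lemma prim_spline {M q : ℕ} (hM : 1 ≤ M) {s : ℝ → ℝ} (hs : Spl M q s) (c : ℝ) :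
    IsSpline M (q + 1) (fun x => c + ∫ t in (0:ℝ)..x, s t) ∧
    (∀ x ∉ knots M, deriv (fun x => c + ∫ t in (0:ℝ)..x, s t) x = s x) := by
  have hM' : (0:ℝ) < M := by exact_mod_cast hM
  set w : ℝ → ℝ := fun x => c + ∫ t in (0:ℝ)..x, s t with hw
  have hI := hs.1.intble hM
  have key : ∀ j < M, ∃ Q : Polynomial ℝ, Q.natDegree ≤ q + 1 ∧ (∀ x ∈ pieceSet M j, w x = Q.eval x) ∧
      ∀ x ∈ opiece M j, Q.derivative.eval x = s x := by
    intro j hj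
    obtain ⟨P, h1, h2⟩ := hs.1 j hj
    obtain ⟨Q, h3, h4⟩ := exists_antideriv q P h1
    set a : ℝ := (j:ℝ) / M with ha
    have haj : a ∈ pieceSet M j := by
      rw [mem_piece M j hj]
      refine ⟨Or.inr le_rfl, Or.inr ?_⟩
      rw [ha]; gcongr; linarith
    refine ⟨Q + Polynomial.C (w a - Q.eval a), ?_, ?_, ?_⟩
    · rw [Polynomial.natDegree_add_C]; exact h3
    · intro x hx
      have e1 : w x - w a = ∫ t in a..x, s t := by
        simp only [hw]; rw [← intervalIntegral.integral_add_adjacent_intervals (hI 0 a) (hI a x)]; ring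
      have e2 : ∫ t in a..x, s t = ∫ t in a..x, P.eval t := by
        refine intervalIntegral.integral_congr_ae ?_
        filter_upwards [knots_ae M volume] with t ht ht2
        refine h2 t (piece_diff M j hj t ?_ ht)
        exact (ordConn_piece M j hj).uIcc_subset haj hx (uIoc_subset_uIcc ht2)
      have e3 : ∫ t in a..x, P.eval t = Q.eval x - Q.eval a :=
        intervalIntegral.integral_eq_sub_of_hasDerivAt (fun t _ => h4 ▸ Q.hasDerivAt t)
          (P.continuous.intervalIntegrable _ _)
      simp only [Polynomial.eval_add, Polynomial.eval_C]
      linarith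
    · intro x hx
      simp [h4, h2 x hx]
  have hwc : Continuous w := continuous_const.add (intervalIntegral.continuous_primitive hI 0)
  refine ⟨⟨?_, fun j hj => ?_⟩, fun x hx => ?_⟩
  · rw [Nat.add_sub_cancel]
    rcases q with _ | r
    · exact contDiffOn_zero.2 hwc.continuousOn
    · obtain ⟨hc, hd⟩ := hs.2 (by omega)
      have hder : ∀ x, HasDerivAt w (s x) x := fun x =>
        (hc.integral_hasStrictDerivAt 0 x).hasDerivAt.const_add c
      have hder2 : deriv w = s := funext fun x => (hder x).deriv
      push_cast
      rw [contDiffOn_succ_iff_deriv_of_isOpen isOpen_Ioo]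
      refine ⟨fun x _ => (hder x).differentiableAt.differentiableWithinAt, by simp, ?_⟩
      rw [hder2]; simpa using hd
  · obtain ⟨Q, h1, h2, _⟩ := key j hj
    exact ⟨Q, h1, h2⟩
  · obtain ⟨j, hj, hxj⟩ := opiece_cover M hM x hx
    obtain ⟨Q, h1, h2, h3⟩ := key j hj
    rw [← h3 x hxj]
    exact (PP.hasDeriv (fun y hy => h2 y (opiece_sub M j hj hy)) x hxj).deriv

lemma IsSpline.spl {M p : ℕ} (hM : 1 ≤ M) {u : ℝ → ℝ} (hu : IsSpline M p u) : Spl M p u :=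
  ⟨hu.pp, fun _ => ⟨hu.continuous hM, hu.1⟩⟩

lemma rep0 (M : ℕ) (x : HH) (hx : x ∈ X0 M) : ∃ s, PP M 0 s ∧ s =ᵐ[mu1] x := by
  unfold X0 at hx
  induction hx using Submodule.span_induction with
  | mem x h =>
    obtain ⟨i, rfl⟩ := h
    refine ⟨(opiece M i).indicator (fun _ => 1), fun j hj => ?_, ?_⟩
    · refine ⟨Polynomial.C (if (i:ℕ) = j then 1 else 0), (Polynomial.natDegree_C _).le, fun x hx => ?_⟩
      by_cases h : (i:ℕ) = j
      · simp [h, hx]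
      · have : x ∉ opiece M i := fun h2 => h (opiece_unique M i j i.2 hj x h2 hx)
        simp [h, this]
    · have h1 : (ind M i : ℝ → ℝ) =ᵐ[mu1] (Ij M i).indicator (fun _ => (1:ℝ)) :=
        indicatorConstLp_coeFn
      have hM : (0:ℝ) < M := by exact_mod_cast i.pos
      filter_upwards [h1, knots_ae M mu1, ae_mu1] with x h1 h2 h3
      rw [h1]
      have : x ∈ opiece M i ↔ x ∈ Ij M i := by
        constructor
        · intro h
          refine ⟨?_, ?_⟩
          · rcases h.1 with h | h
            · rw [h]; simpa using h3.1.le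
            · exact h.le
          · rcases h.2 with h | h
            · have : ((i:ℕ):ℝ) + 1 = M := by exact_mod_cast (by omega : (i:ℕ) + 1 = M)
              rw [this, div_self hM.ne']; exact h3.2
            · exact h
        · intro h
          refine ⟨Or.inr (lt_of_le_of_ne h.1 fun h => h2 ⟨i, h⟩), Or.inr h.2⟩
      by_cases h : x ∈ Ij M i
      · simp [h, this.2 h]
      · simp [h, mt this.1 h]
  | zero => 
    refine ⟨fun _ => 0, fun j hj => ⟨0, by simp, by simp⟩, ?_⟩
    filter_upwards [Lp.coeFn_zero ℝ 2 mu1] with x hx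
    rw [hx]; rfl
  | add x y _ _ hx hy =>
    obtain ⟨s, h1, h2⟩ := hx
    obtain ⟨t, h3, h4⟩ := hy
    refine ⟨_, h1.add h3, ?_⟩
    filter_upwards [h2, h4, Lp.coeFn_add x y] with z z1 z2 z3
    rw [z3, Pi.add_apply, z1, z2]
  | smul c x _ hx =>
    obtain ⟨s, h1, h2⟩ := hx
    refine ⟨_, h1.smul c, ?_⟩
    filter_upwards [h2, Lp.coeFn_smul c x] with z z1 z3
    rw [z3, Pi.smul_apply, z1, smul_eq_mul]

lemma rep (M : ℕ) (hM : 1 ≤ M) (q : ℕ) : ∀ x ∈ XX oneH KK (X0 M) q, ∃ s, Spl M q s ∧ s =ᵐ[mu1] x := by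
  induction q with
  | zero =>
    intro x hx
    obtain ⟨s, h1, h2⟩ := rep0 M x hx
    exact ⟨s, ⟨h1, by simp⟩, h2⟩
  | succ q ih =>
    intro x hx
    change x ∈ (Submodule.span ℝ {oneH}) ⊔ (XX oneH KK (X0 M) q).map KK at hx
    obtain ⟨y, hy, z, hz, rfl⟩ := Submodule.mem_sup.1 hx
    obtain ⟨c, rfl⟩ := Submodule.mem_span_singleton.1 hy
    obtain ⟨f, hf, rfl⟩ := hz
    obtain ⟨s, h1, h2⟩ := ih f hf
    refine ⟨_, (prim_spline hM h1 c).1.spl hM, ?_⟩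
    filter_upwards [Lp.coeFn_add (c • oneH) (KK f), Lp.coeFn_smul c oneH, oneH_coe, KK_coe f, ae_mu1]
      with x x1 x2 x3 x4 x5
    rw [x1, Pi.add_apply, x2, Pi.smul_apply, x3, x4, ← prim_congr h2, prim_eq_interval _ _ x5]
    simp

end SplineMG

namespace SplineMG

def SV (m p : ℕ) : Submodule ℝ (ℝ → ℝ) where
  carrier := {w | IsSpline m p w}
  zero_mem' := ⟨contDiffOn_const, fun j _ => ⟨0, by simp, by simp⟩⟩
  add_mem' := by
    rintro u v ⟨h1, h2⟩ ⟨h3, h4⟩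
    refine ⟨h1.add h3, fun j hj => ?_⟩
    obtain ⟨P, a1, a2⟩ := h2 j hj
    obtain ⟨Q, b1, b2⟩ := h4 j hj
    refine ⟨P + Q, (Polynomial.natDegree_add_le _ _).trans (by omega), fun x hx => ?_⟩
    rw [Polynomial.eval_add, Pi.add_apply, a2 x hx, b2 x hx]
  smul_mem' := by
    rintro c u ⟨h1, h2⟩
    refine ⟨contDiffOn_const.smul h1, fun j hj => ?_⟩
    obtain ⟨P, a1, a2⟩ := h2 j hj
    refine ⟨Polynomial.C c * P, (Polynomial.natDegree_C_mul_le _ _).trans a1, fun x hx => ?_⟩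
    rw [Polynomial.eval_mul, Polynomial.eval_C, Pi.smul_apply, smul_eq_mul, a2 x hx]

lemma SV_one (m p : ℕ) : (fun _ => (1:ℝ)) ∈ SV m p :=
  ⟨contDiffOn_const, fun j _ => ⟨1, by simp, by simp⟩⟩

lemma eval_zero (m p : ℕ) (hm : 1 ≤ m) (j : ℕ) (P : Polynomial ℝ) (hP : P.natDegree ≤ p)
    (h : ∀ k : Fin (p + 1), P.eval (((j:ℝ) + (k:ℝ) / (p + 1)) / m) = 0) : P = 0 := by
  classical
  have hm' : (0:ℝ) < m := by exact_mod_cast hm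
  refine Polynomial.eq_zero_of_natDegree_lt_card_of_eval_eq_zero' P
    (Finset.univ.image (fun k : Fin (p + 1) => ((j:ℝ) + (k:ℝ) / (p + 1)) / m)) ?_ ?_
  · intro i hi
    obtain ⟨k, _, rfl⟩ := Finset.mem_image.1 hi
    exact h k
  · rw [Finset.card_image_of_injective]
    · simp; omega
    · intro a b hab
      have hp : ((p:ℝ) + 1) ≠ 0 := by positivity
      have : (a:ℝ) = b := by
        field_simp at hab
        linarith
      exact Fin.ext (by exact_mod_cast this)

lemma pt_mem (m p j k : ℕ) (hj : j < m) (hk : k < p + 1) :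
    (((j:ℝ) + (k:ℝ) / (p + 1)) / m) ∈ pieceSet m j := by
  have hm' : (0:ℝ) < m := by exact_mod_cast (by omega : 0 < m)
  have : (k:ℝ) / (p + 1) ≤ 1 := by
    rw [div_le_one (by positivity)]; exact_mod_cast hk.le
  have h0 : 0 ≤ (k:ℝ) / (p + 1) := by positivity
  rw [mem_piece m j hj]
  refine ⟨Or.inr ?_, Or.inr ?_⟩
  · gcongr; linarith
  · gcongr

lemma SV_fin (m p : ℕ) (hm : 1 ≤ m) : FiniteDimensional ℝ (SV m p) := by
  let T : SV m p →ₗ[ℝ] (Fin m × Fin (p + 1) → ℝ) :=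
    { toFun := fun w i => (w : ℝ → ℝ) (((i.1:ℝ) + (i.2:ℝ) / (p + 1)) / m)
      map_add' := fun u v => rfl
      map_smul' := fun c v => rfl }
  refine FiniteDimensional.of_injective T ?_
  rw [injective_iff_map_eq_zero]
  intro w hw
  ext x
  obtain ⟨j, hj, hx⟩ := piece_cover m hm x
  obtain ⟨P, h1, h2⟩ := w.2.2 j hj
  have : P = 0 := by
    refine eval_zero m p hm j P h1 (fun k => ?_)
    rw [← h2 _ (pt_mem m p j k hj k.2)]
    exact congrFun hw (⟨j, hj⟩, k)
  rw [h2 x hx, this]; simp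

lemma SV_memLp {m p : ℕ} (hm : 1 ≤ m) (w : SV m p) : MemLp (w : ℝ → ℝ) 2 mu1 :=
  (IsSpline.pp w.2).memLp hm

lemma SV_dmemLp {m p : ℕ} (hm : 1 ≤ m) (w : SV m p) : MemLp (deriv (w : ℝ → ℝ)) 2 mu1 :=
  (IsSpline.pp w.2).deriv_pp.memLp hm

def iotaL (m p : ℕ) (hm : 1 ≤ m) : SV m p →ₗ[ℝ] HH where
  toFun w := (SV_memLp hm w).toLp _
  map_add' u v := by
    rw [← MemLp.toLp_add]; rfl
  map_smul' c u := by
    rw [RingHom.id_apply, ← MemLp.toLp_const_smul]; rfl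

def derL (m p : ℕ) (hm : 1 ≤ m) : SV m p →ₗ[ℝ] HH where
  toFun w := (SV_dmemLp hm w).toLp _
  map_add' u v := by
    rw [← MemLp.toLp_add]
    apply MemLp.toLp_congr
    filter_upwards [knots_ae m mu1] with x hx
    rw [Pi.add_apply, Submodule.coe_add, deriv_add ((IsSpline.pp u.2).diff hm x hx)
      ((IsSpline.pp v.2).diff hm x hx)]
  map_smul' c u := by
    rw [RingHom.id_apply, ← MemLp.toLp_const_smul]
    apply MemLp.toLp_congr
    filter_upwards [knots_ae m mu1] with x hx
    rw [Pi.smul_apply, Submodule.coe_smul, deriv_const_smul _ ((IsSpline.pp u.2).diff hm x hx)]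

lemma iota_coe (m p : ℕ) (hm : 1 ≤ m) (w : SV m p) : (iotaL m p hm w : ℝ → ℝ) =ᵐ[mu1] w :=
  MemLp.coeFn_toLp (SV_memLp hm w)

lemma der_coe (m p : ℕ) (hm : 1 ≤ m) (w : SV m p) :
    (derL m p hm w : ℝ → ℝ) =ᵐ[mu1] deriv (w : ℝ → ℝ) :=
  MemLp.coeFn_toLp (SV_dmemLp hm w)

lemma iota_inj (m p : ℕ) (hm : 1 ≤ m) : Function.Injective (iotaL m p hm) := by
  rw [injective_iff_map_eq_zero]
  intro w hw
  have hm' : (0:ℝ) < m := by exact_mod_cast hm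
  have h0 : (w : ℝ → ℝ) =ᵐ[mu1] fun _ => 0 := by
    filter_upwards [iota_coe m p hm w, Lp.coeFn_zero ℝ 2 mu1] with x x1 x2
    rw [← x1, hw, x2]; rfl
  have h1 : EqOn (w : ℝ → ℝ) (fun _ => 0) (Ioo 0 1) :=
    Measure.eqOn_open_of_ae_eq h0 isOpen_Ioo (IsSpline.continuous hm w.2).continuousOn
      continuousOn_const
  ext x
  obtain ⟨j, hj, hx⟩ := piece_cover m hm x
  obtain ⟨P, h3, h2⟩ := w.2.2 j hj
  have : P = 0 := by
    refine Polynomial.eq_zero_of_infinite_isRoot P ?_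
    have hlt : (j:ℝ) / m < ((j:ℝ) + 1) / m := by gcongr; linarith
    refine (Ioo_infinite hlt).mono ?_
    intro y hy
    have hy1 : y ∈ Ioo (0:ℝ) 1 := by
      have hj1 : ((j:ℝ) + 1) / m ≤ 1 := by
        rw [div_le_one hm']; exact_mod_cast hj
      have hj0 : 0 ≤ (j:ℝ) / m := by positivity
      exact ⟨hj0.trans_lt hy.1, hy.2.trans_le hj1⟩
    have hy2 : y ∈ pieceSet m j := by
      rw [mem_piece m j hj]
      exact ⟨Or.inr hy.1.le, Or.inr hy.2.le⟩
    change P.eval y = 0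
    rw [← h2 y hy2]; exact h1 hy1
  rw [h2 x hx, this]; simp

lemma refine_spline (M p : ℕ) (u : ℝ → ℝ) (hu : IsSpline M p u) : IsSpline (2 * M) p u := by
  refine ⟨hu.1, fun j hj => ?_⟩
  obtain ⟨P, h1, h2⟩ := hu.2 (j / 2) (by omega)
  have hM : (0:ℝ) < M := by exact_mod_cast (by omega : 0 < M)
  refine ⟨P, h1, fun x hx => h2 x ?_⟩
  rw [mem_piece _ _ (by omega)]
  rw [mem_piece _ _ hj] at hx
  constructor
  · rcases hx.1 with h | h
    · left; omega
    · right
      refine le_trans ?_ h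
      rw [div_le_div_iff₀ hM (by push_cast; linarith)]
      have : ((j / 2 : ℕ):ℝ) * 2 ≤ j := by exact_mod_cast (by omega)
      push_cast
      nlinarith
  · rcases hx.2 with h | h
    · left; omega
    · right
      refine h.trans ?_
      rw [div_le_div_iff₀ (by push_cast; linarith) hM]
      have : (j:ℝ) + 1 ≤ (((j / 2 : ℕ):ℝ) + 1) * 2 := by exact_mod_cast (by omega)
      push_cast
      nlinarith

theorem oneD (M p : ℕ) (hM : 1 ≤ M) (hp : 1 ≤ p) :
    ∃ (n : ℕ) (φ : Fin n → ℝ → ℝ) (l : Fin n → ℝ) (R : Fin n → Fin n → ℝ),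
      (∀ a, IsSpline (2 * M) p (φ a)) ∧
      (∀ w, IsSpline (2 * M) p w → ∃ c : Fin n → ℝ, ∀ x, w x = ∑ a, c a * φ a x) ∧
      (∀ a b, ∫ x, φ a x * φ b x ∂mu1 = if a = b then 1 else 0) ∧
      (∀ a b, ∫ x, deriv (φ a) x * deriv (φ b) x ∂mu1 = if a = b then l a else 0) ∧
      (∀ b, IsSpline M p (fun x => ∑ a, R a b * φ a x)) ∧ Good R l (2 * (1 / (M:ℝ)) ^ 2) := by
  have hm : 1 ≤ 2 * M := by omega
  have := SV_fin (2 * M) p hm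
  let e0 : SV (2 * M) p →ₗ[ℝ] ℝ :=
    { toFun := fun w => (w : ℝ → ℝ) 0
      map_add' := fun u v => rfl
      map_smul' := fun c v => rfl }
  let one : SV (2 * M) p := ⟨_, SV_one (2 * M) p⟩
  let Vc : Submodule ℝ (SV (2 * M) p) := (SV M p).comap (SV (2 * M) p).subtype
  have hone : iotaL (2 * M) p hm one = oneH := by
    apply Lp.ext
    filter_upwards [iota_coe (2 * M) p hm one, oneH_coe] with x x1 x2
    rw [x1, x2]
  have := XX_fin oneH KK (X0 M) (p - 1)
  obtain ⟨n, φ, l, R, h1, h2, h3, h4, h5⟩ := oneD_abstract (iotaL (2 * M) p hm) (derL (2 * M) p hm)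
    (iota_inj (2 * M) p hm) e0 one Vc KK (by rw [hone]; exact KK_adj)
    (by
      apply Lp.ext
      filter_upwards [der_coe (2 * M) p hm one, Lp.coeFn_zero ℝ 2 mu1] with x x1 x2
      rw [x1, x2]; simp [one])
    (by
      intro w
      rw [hone]
      apply Lp.ext
      filter_upwards [iota_coe (2 * M) p hm w, Lp.coeFn_add (e0 w • oneH) (KK (derL (2 * M) p hm w)),
        Lp.coeFn_smul (e0 w) oneH, oneH_coe, KK_coe (derL (2 * M) p hm w), ae_mu1]
        with x x1 x2 x3 x4 x5 x6
      rw [x1, x2, Pi.add_apply, x3, Pi.smul_apply, x4, x5, prim_congr (der_coe (2 * M) p hm w),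
        prim_eq_interval _ _ x6, IsSpline.ftc hm w.2]
      simp [e0])
    (XX oneH KK (X0 M) (p - 1))
    (by rw [hone]; exact XX_one _ _ _ (X0_one M hM) _)
    (1 / (M:ℝ)) (by positivity)
    (XX_approx oneH KK KK_adj (X0 M) (X0_one M hM) (1 / (M:ℝ)) (by positivity) (X0_approx M hM) (p - 1))
    (by
      intro x hx c
      obtain ⟨s, hs, hsx⟩ := rep M hM (p - 1) x hx
      obtain ⟨a1, a2⟩ := prim_spline hM hs c
      rw [Nat.sub_add_cancel hp] at a1
      refine ⟨⟨_, refine_spline M p _ a1⟩, a1, ?_, ?_⟩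
      · apply Lp.ext
        refine (der_coe _ _ _ _).trans ?_
        filter_upwards [hsx, knots_ae M mu1] with y y1 y2
        rw [← y1]; exact a2 y y2
      · simp [e0])
  refine ⟨n, fun a => φ a, l, R, fun a => (φ a).2, fun w hw => ?_, fun a b => ?_, fun a b => ?_,
    fun b => ?_, h5⟩
  · refine ⟨fun a => inner ℝ (iotaL (2 * M) p hm (φ a)) (iotaL (2 * M) p hm ⟨w, hw⟩), fun x => ?_⟩
    · have := congrArg (fun v : SV (2 * M) p => (v : ℝ → ℝ) x) (h1 ⟨w, hw⟩)
      simpa [Submodule.coe_sum, Finset.sum_apply] using this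
  · rw [← h2 a b, inner_eq]
    refine integral_congr_ae ?_
    filter_upwards [iota_coe (2 * M) p hm (φ a), iota_coe (2 * M) p hm (φ b)] with x x1 x2
    rw [x1, x2]
  · rw [← h3 a b, inner_eq]
    refine integral_congr_ae ?_
    filter_upwards [der_coe (2 * M) p hm (φ a), der_coe (2 * M) p hm (φ b)] with x x1 x2
    rw [x1, x2]
  · have : ((∑ a, R a b • φ a : SV (2 * M) p) : ℝ → ℝ) ∈ SV M p := h4 b
    have h6 : (fun x => ∑ a, R a b * (φ a : ℝ → ℝ) x) =
        ((∑ a, R a b • φ a : SV (2 * M) p) : ℝ → ℝ) := by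
      funext x
      simp [Submodule.coe_sum, Finset.sum_apply]
    rw [← h6] at this
    exact this

end SplineMG

namespace SplineMG

def gn {d n : ℕ} (ψ : Fin d → Fin n → ℝ → ℝ) (c : (Fin d → Fin n) → ℝ) (x : Fin d → ℝ) : ℝ :=
  ∑ k, c k * ∏ i, ψ i (k i) (x i)

def nu (d : ℕ) : Measure (Fin d → ℝ) := Measure.pi (fun _ => mu1)

lemma nu_eq (d : ℕ) : (volume : Measure (Fin d → ℝ)).restrict (cube d) = nu d := by
  unfold cube nu mu1
  rw [volume_pi, Measure.restrict_pi_pi]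

lemma gn_int {d n : ℕ} (ψ : Fin d → Fin n → ℝ → ℝ) (lam : Fin d → Fin n → ℝ)
    (hi : ∀ i a b, Integrable (fun x => ψ i a x * ψ i b x) mu1)
    (ho : ∀ i a b, ∫ x, ψ i a x * ψ i b x ∂mu1 = if a = b then lam i a else 0)
    (c c' : (Fin d → Fin n) → ℝ) :
    Integrable (fun x => gn ψ c x * gn ψ c' x) (nu d) ∧
    ∫ x, gn ψ c x * gn ψ c' x ∂(nu d) = ∑ k, c k * c' k * ∏ i, lam i (k i) := by
  classical
  have e : ∀ x, gn ψ c x * gn ψ c' x =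
      ∑ k, ∑ k', c k * c' k' * ∏ i, (ψ i (k i) (x i) * ψ i (k' i) (x i)) := by
    intro x
    unfold gn
    rw [Finset.sum_mul_sum]
    refine Finset.sum_congr rfl fun k _ => Finset.sum_congr rfl fun k' _ => ?_
    rw [Finset.prod_mul_distrib]; ring
  have i1 : ∀ k k' : Fin d → Fin n, Integrable (fun x : Fin d → ℝ =>
      c k * c' k' * ∏ i, (ψ i (k i) (x i) * ψ i (k' i) (x i))) (nu d) := fun k k' =>
    (Integrable.fintype_prod (f := fun i t => ψ i (k i) t * ψ i (k' i) t)
      (fun i => hi i (k i) (k' i))).const_mul _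
  simp only [e]
  refine ⟨integrable_finsetSum _ fun k _ => integrable_finsetSum _ fun k' _ => i1 k k', ?_⟩
  rw [integral_finsetSum _ fun k _ => integrable_finsetSum _ fun k' _ => i1 k k']
  refine Finset.sum_congr rfl fun k _ => ?_
  rw [integral_finsetSum _ fun k' _ => i1 k k']
  have e2 : ∀ k', ∫ x : Fin d → ℝ, c k * c' k' * ∏ i, (ψ i (k i) (x i) * ψ i (k' i) (x i)) ∂(nu d) =
      if k = k' then c k * c' k' * ∏ i, lam i (k i) else 0 := by
    intro k'
    rw [integral_const_mul, nu,
      integral_fintype_prod_eq_prod (f := fun i t => ψ i (k i) t * ψ i (k' i) t)]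
    simp only [ho]
    by_cases h : k = k'
    · subst h; simp
    · rw [if_neg h]
      obtain ⟨i, hi⟩ := Function.ne_iff.1 h
      rw [Finset.prod_eq_zero (Finset.mem_univ i) (if_neg hi), mul_zero]
  simp only [e2]
  simp

lemma pd_gn {d n : ℕ} (φ : Fin n → ℝ → ℝ) (c : (Fin d → Fin n) → ℝ) (i : Fin d) (x : Fin d → ℝ)
    (hx : ∀ a, DifferentiableAt ℝ (φ a) (x i)) :
    pd d i (gn (fun _ => φ) c) x = gn (fun j a => if j = i then deriv (φ a) else φ a) c x := by
  classical
  unfold pd gn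
  have : ∀ k : Fin d → Fin n, HasDerivAt (fun t => c k * ∏ j, φ (k j) (Function.update x i t j))
      (c k * ∏ j, (if j = i then deriv (φ (k j)) else φ (k j)) (x j)) (x i) := by
    intro k
    refine HasDerivAt.const_mul _ ?_
    have e1 : (fun t => ∏ j, φ (k j) (Function.update x i t j)) = 
        fun t => φ (k i) t * ∏ j ∈ Finset.univ.erase i, φ (k j) (x j) := by
      funext t
      rw [← Finset.mul_prod_erase _ _ (Finset.mem_univ i), Function.update_self]
      congr 1
      refine Finset.prod_congr rfl fun j hj => ?_
      rw [Function.update_of_ne (Finset.ne_of_mem_erase hj)]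
    rw [e1, ← Finset.mul_prod_erase _ _ (Finset.mem_univ i), if_pos rfl]
    have e2 : ∏ j ∈ Finset.univ.erase i, (if j = i then deriv (φ (k j)) else φ (k j)) (x j) =
        ∏ j ∈ Finset.univ.erase i, φ (k j) (x j) := by
      refine Finset.prod_congr rfl fun j hj => ?_
      rw [if_neg (Finset.ne_of_mem_erase hj)]
    rw [e2]
    exact (hx (k i)).hasDerivAt.mul_const _
  exact (HasDerivAt.fun_sum fun k _ => this k).deriv

section main
variable {d n m p : ℕ} (φ : Fin n → ℝ → ℝ) (l : Fin n → ℝ)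

lemma l2_gn (hm : 1 ≤ m) (hφ : ∀ a, IsSpline m p (φ a))
    (h1 : ∀ a b, ∫ x, φ a x * φ b x ∂mu1 = if a = b then 1 else 0) (c : (Fin d → Fin n) → ℝ) :
    l2normSqD d (gn (fun _ => φ) c) = ∑ k, c k ^ 2 := by
  unfold l2normSqD
  rw [nu_eq]
  simp only [sq]
  rw [(gn_int (fun _ => φ) (fun _ _ => 1)
    (fun _ a b => ((hφ a).pp.mul (hφ b).pp).integrable hm) (fun _ => h1) c c).2]
  simp

lemma a_gn (hm : 1 ≤ m) (hφ : ∀ a, IsSpline m p (φ a))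
    (h1 : ∀ a b, ∫ x, φ a x * φ b x ∂mu1 = if a = b then 1 else 0)
    (h2 : ∀ a b, ∫ x, deriv (φ a) x * deriv (φ b) x ∂mu1 = if a = b then l a else 0)
    (c c' : (Fin d → Fin n) → ℝ) :
    aForm d (gn (fun _ => φ) c) (gn (fun _ => φ) c') = ∑ k, wt l k * (c k * c' k) := by
  unfold aForm
  rw [nu_eq]
  have g0 := gn_int (d := d) (fun _ => φ) (fun _ _ => 1)
    (fun _ a b => ((hφ a).pp.mul (hφ b).pp).integrable hm) (fun _ => h1) c c'
  have gi : ∀ i : Fin d, _ := fun i =>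
    gn_int (d := d) (fun j a => if j = i then deriv (φ a) else φ a) (fun j a => if j = i then l a else 1)
    (fun j a b => by
      by_cases h : j = i
      · simp only [h, if_true]; exact ((hφ a).pp.deriv_pp.mul (hφ b).pp.deriv_pp).integrable hm
      · simp only [h, if_false]; exact ((hφ a).pp.mul (hφ b).pp).integrable hm) 
    (fun j a b => by
      by_cases h : j = i
      · simp only [h, if_true]; exact h2 a b
      · simp only [h, if_false]; exact h1 a b) c c'
  have hae : ∀ᵐ x ∂(nu d), ∀ i, x i ∉ knots m := by
    rw [ae_all_iff]; intro i
    exact (Measure.tendsto_eval_ae_ae (μ := fun _ : Fin d => mu1) (i := i)).eventually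
      (knots_ae m mu1)
  have e : ∫ x, ((∑ i, pd d i (gn (fun _ => φ) c) x * pd d i (gn (fun _ => φ) c') x) +
      gn (fun _ => φ) c x * gn (fun _ => φ) c' x) ∂(nu d) =
      ∫ x, ((∑ i, gn (fun j a => if j = i then deriv (φ a) else φ a) c x *
        gn (fun j a => if j = i then deriv (φ a) else φ a) c' x) +
      gn (fun _ => φ) c x * gn (fun _ => φ) c' x) ∂(nu d) := by
    refine integral_congr_ae ?_
    filter_upwards [hae] with x hx
    congr 1
    refine Finset.sum_congr rfl fun i _ => ?_
    rw [pd_gn φ c i x (fun a => (hφ a).pp.diff hm _ (hx i)),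
      pd_gn φ c' i x (fun a => (hφ a).pp.diff hm _ (hx i))]
  rw [e, integral_add (integrable_finsetSum _ fun i _ => (gi i).1) g0.1,
    integral_finsetSum _ fun i _ => (gi i).1, g0.2]
  simp only [(gi _).2]
  rw [Finset.sum_comm, ← Finset.sum_add_distrib]
  refine Finset.sum_congr rfl fun k _ => ?_
  simp only [Finset.prod_ite_eq', Finset.mem_univ, if_true, Finset.prod_const_one, wt]
  rw [← Finset.mul_sum]; ring

lemma tensor_rep (hs : ∀ w, IsSpline m p w → ∃ c : Fin n → ℝ, ∀ x, w x = ∑ a, c a * φ a x)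
    (u : (Fin d → ℝ) → ℝ) (hu : u ∈ TensorSpline d m p) : ∃ c, u = gn (fun _ => φ) c := by
  classical
  unfold TensorSpline at hu
  induction hu using Submodule.span_induction with
  | mem x h =>
    obtain ⟨f, hf, rfl⟩ := h
    choose C hC using fun i => hs (f i) (hf i)
    refine ⟨fun k => ∏ i, C i (k i), ?_⟩
    funext x
    unfold gn
    simp only [hC]
    rw [Finset.prod_univ_sum, Fintype.piFinset_univ]
    refine Finset.sum_congr rfl fun k _ => ?_
    rw [Finset.prod_mul_distrib]
  | zero => exact ⟨0, by funext x; simp [gn]⟩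
  | add x y _ _ hx hy =>
    obtain ⟨a, rfl⟩ := hx
    obtain ⟨b, rfl⟩ := hy
    refine ⟨a + b, ?_⟩
    funext x; simp [gn, add_mul, Finset.sum_add_distrib]
  | smul t x _ hx =>
    obtain ⟨a, rfl⟩ := hx
    refine ⟨t • a, ?_⟩
    funext x; simp [gn, Finset.mul_sum, mul_assoc]

end main

lemma tensor_mono (d M p : ℕ) : TensorSpline d M p ≤ TensorSpline d (2 * M) p := by
  refine Submodule.span_mono ?_
  rintro u ⟨f, hf, rfl⟩
  exact ⟨f, fun i => refine_spline M p _ (hf i), rfl⟩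

lemma iter_mem {d n M p : ℕ} (φ : Fin n → ℝ → ℝ) (R : Fin n → Fin n → ℝ)
    (hR : ∀ b, IsSpline M p (fun x => ∑ a, R a b * φ a x)) (z : (Fin d → Fin n) → ℝ) :
    gn (fun _ => φ) (iterOp R z d) ∈ TensorSpline d M p := by
  have : gn (fun _ => φ) (iterOp R z d) =
      ∑ k, z k • (fun x : Fin d → ℝ => ∏ i, (fun t => ∑ a, R a (k i) * φ a t) (x i)) := by
    funext x
    unfold gn
    rw [fn_iterOp R z d (fun i a => φ a (x i))]
    simp [Finset.sum_apply]
  rw [this]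
  refine Submodule.sum_mem _ fun k _ => Submodule.smul_mem _ _ (Submodule.subset_span ?_)
  exact ⟨fun i t => ∑ a, R a (k i) * φ a t, fun i => hR (k i), rfl⟩

lemma main_bound (d M p : ℕ) (hM : 1 ≤ M) (hp : 1 ≤ p) (u v : (Fin d → ℝ) → ℝ)
    (hu : u ∈ TensorSpline d (2 * M) p) (hv : v ∈ TensorSpline d M p)
    (ho : ∀ w ∈ TensorSpline d M p, aForm d (u - v) w = 0) :
    l2normSqD d (u - v) ≤ d * (2 * (1 / (M:ℝ)) ^ 2 * 4 ^ d) * aForm d u u := by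
  obtain ⟨n, φ, l, R, hφ, hs, h1, h2, hR, g⟩ := oneD M p hM hp
  have hm : 1 ≤ 2 * M := by omega
  obtain ⟨a, rfl⟩ := tensor_rep φ hs u hu
  obtain ⟨b, rfl⟩ := tensor_rep φ hs v (tensor_mono d M p hv)
  have hsub : gn (fun _ : Fin d => φ) a - gn (fun _ => φ) b = gn (fun _ => φ) (a - b) := by
    funext x; simp [gn, sub_mul, Finset.sum_sub_distrib]
  rw [hsub] at ho ⊢
  rw [l2_gn φ hm hφ h1, a_gn φ l hm hφ h1 h2]
  have o1 := ho _ hv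
  have o2 := ho _ (iter_mem φ R hR (fun k => (a - b) k / wt l k))
  rw [a_gn φ l hm hφ h1 h2] at o1 o2
  have t := tensor_main g (a - b) (by rw [← o2]; exact Finset.sum_congr rfl fun k _ => by ring)
  refine t.trans (mul_le_mul_of_nonneg_left ?_ (by positivity))
  have e : ∑ k, wt l k * (a k * a k) = ∑ k, wt l k * (a - b) k ^ 2 + ∑ k, wt l k * b k ^ 2 +
      2 * ∑ k, wt l k * ((a - b) k * b k) := by
    rw [Finset.mul_sum, ← Finset.sum_add_distrib, ← Finset.sum_add_distrib]
    refine Finset.sum_congr rfl fun k _ => ?_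
    simp only [Pi.sub_apply]; ring
  rw [e, o1]
  have : 0 ≤ ∑ k, wt l k * b k ^ 2 := Finset.sum_nonneg fun k _ =>
    mul_nonneg (zero_le_one.trans (wt_pos g k)) (sq_nonneg _)
  linarith

/-- Lemma `lemma:approx:dd`: for every dimension `d ≥ 1` there is a
constant `c > 0` independent of `h = 1/m` and `p` (possibly depending on `d`) such
that the `a(·,·)`-orthogonal (Galerkin) projector `T_c : S^d → (S_c)^d` onto the
coarse tensor product spline space satisfies
`‖u − T_c u‖_{L²(Ω)} ≤ c · h · a(u,u)^{1/2}` for all `u ∈ S^d`. -/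
theorem coarse_grid_approximation :
    ∀ d : ℕ, 1 ≤ d → ∃ c : ℝ, 0 < c ∧ ∀ m p : ℕ, m % 2 = 0 → 2 ≤ m → 1 ≤ p →
      ∀ u : (Fin d → ℝ) → ℝ, u ∈ TensorSpline d m p →
      ∀ v : (Fin d → ℝ) → ℝ, IsGalerkinCoarseProj d m p u v →
        Real.sqrt (l2normSqD d (u - v)) ≤
          c * (1 / (m : ℝ)) * Real.sqrt (aForm d u u) := by
  intro d hd
  have hd' : (0:ℝ) < d := by exact_mod_cast hd
  refine ⟨Real.sqrt (8 * d * 4 ^ d), Real.sqrt_pos.2 (by positivity), ?_⟩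
  intro m p hm2 hm hp u hu v hv
  obtain ⟨M, rfl⟩ : ∃ M, m = 2 * M := ⟨m / 2, by omega⟩
  have hM : 1 ≤ M := by omega
  have hM' : (0:ℝ) < M := by exact_mod_cast hM
  have e : 2 * M / 2 = M := by omega
  unfold IsGalerkinCoarseProj TensorSplineCoarse at hv
  rw [e] at hv
  have key := main_bound d M p hM hp u v hu hv.1 hv.2
  refine (Real.sqrt_le_sqrt key).trans (le_of_eq ?_)
  have e2 : (d:ℝ) * (2 * (1 / (M:ℝ)) ^ 2 * 4 ^ d) = (8 * d * 4 ^ d) * (1 / ((2 * M : ℕ):ℝ)) ^ 2 := by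
    push_cast; field_simp; ring
  rw [e2, Real.sqrt_mul (by positivity), Real.sqrt_mul (by positivity), Real.sqrt_sq (by positivity)]

end SplineMG
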